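/- Let G be a finite group, V a finite dimensional kG-module, and S = T_k(V)/(R) a Koszul algebra with R ⊆ V⊗V closed under the action of G. A filtered algebra H is a PBW deformation of the skew group algebra S⋊G if and only if H ≅ H_{λ,α,β} for some k-linear parameter functions α: R → V⊗kG, β: R → kG, λ: kG⊗V → kG satisfying, upon projection of the images of the maps to S⋊G: (1) 1⊗λ − λ∘(m⊗1) + (λ⊗1)∘(1⊗σ) = 0 as maps on kG⊗kG⊗V; (2) λ∘(λ⊗1) − λ∘(1⊗α) = (1⊗β) − (β⊗1)∘(1⊗σ)∘(σ⊗1) as maps on kG⊗R; (3) (1⊗α) − (α⊗1)∘(1⊗σ)∘(σ⊗1) = λ⊗1 + (1⊗λ)∘(σ⊗1) as maps on kG⊗R; (4) α∘((1⊗σ)∘(α⊗1) − 1⊗α) + Σ_{g∈G} α_g ⊗ λ(g⊗−) = 1⊗β − β⊗1 on (V⊗R)∩(R⊗V); (5) β∘((1⊗σ)∘(α⊗1) − 1⊗α) = −λ∘(β⊗1) on (V⊗R)∩(R⊗V); (6) α⊗1 − 1⊗α = 0 on (V⊗R)∩(R⊗V) ⊆ V⊗V⊗V; moreover condition (6) implies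 that the maps in (4) and (5) are defined on (V⊗R)∩(R⊗V). -/

import Mathlib

open TensorProduct

noncomputable section

namespace DeformKoszul

variable (k G V : Type) [Field k] [Group G] [AddCommGroup V] [Module k V]

/-! ### Koszulity (Backelin's distributivity criterion) -/

/-- `Vpow n = V^{⊗(n+1)}`. -/
def Vpow : ℕ → ModuleCat k
  | 0 => ModuleCat.of k V
  | n+1 => ModuleCat.of k (V ⊗[k] (Vpow n))

variable (R : Submodule k (V ⊗[k] V))

/-- `Wsub m i` is the subspace `V^{⊗i} ⊗ R ⊗ V^{⊗(m-1-i)}` of `V^{⊗(m+1)}`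
(junk value `⊥` for `i > m-1`). -/
def Wsub : (m : ℕ) → ℕ → Submodule k (Vpow k V m)
  | 0, _ => ⊥
  | 1, 0 => R
  | 1, _+1 => ⊥
  | m+2, 0 =>
      Submodule.map (TensorProduct.assoc k V V (Vpow k V m)).toLinearMap
        (LinearMap.range (TensorProduct.map R.subtype (LinearMap.id (M := Vpow k V m))))
  | m+1, i+1 =>
      LinearMap.range (TensorProduct.map (LinearMap.id (M := V)) (Wsub m i).subtype)

/-- The quadratic algebra `S = T(V)/(R)` is **Koszul**.  We use Backelin's criterion:
`S` is Koszul iff for each `n` the subspaces `V^{⊗i} ⊗ R ⊗ V^{⊗j}` of `V^{⊗n}`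
generate a distributive lattice; for finite collections of subspaces of a vector space
distributivity is equivalent to the existence of a basis of `V^{⊗n}` from which each of
the subspaces can be spanned. -/
def IsKoszul : Prop :=
  ∀ m : ℕ, ∃ (ι : Type) (b : Module.Basis ι k (Vpow k V m)),
    ∀ i : ℕ, ∃ J : Set ι, Wsub k V R m i = Submodule.span k (⇑b '' J)

/-! ### The deformed algebra `H_{λ,α,β}` -/

/-- The free `k`-algebra on the vector space `kG ⊕ V`. -/
abbrev FreeAlg := TensorAlgebra k (MonoidAlgebra k G × V)

/-- The canonical embedding of the group algebra `kG` into the free algebra. -/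
def gIn : MonoidAlgebra k G →ₗ[k] FreeAlg k G V :=
  (TensorAlgebra.ι k).comp (LinearMap.inl k (MonoidAlgebra k G) V)

/-- The canonical embedding of `V` into the free algebra. -/
def vIn : V →ₗ[k] FreeAlg k G V :=
  (TensorAlgebra.ι k).comp (LinearMap.inr k (MonoidAlgebra k G) V)

/-- `V ⊗ V → FreeAlg`, `v ⊗ w ↦ v·w`. -/
def mulVV : V ⊗[k] V →ₗ[k] FreeAlg k G V :=
  (LinearMap.mul' k _).comp (TensorProduct.map (vIn k G V) (vIn k G V))

/-- `V ⊗ kG → FreeAlg`, `v ⊗ x ↦ v·x`. -/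
def embVG : V ⊗[k] MonoidAlgebra k G →ₗ[k] FreeAlg k G V :=
  (LinearMap.mul' k _).comp (TensorProduct.map (vIn k G V) (gIn k G V))

variable (ρ : Representation k G V)

/-- The defining relations of `H_{λ,α,β}` over the generating space `kG ⊕ V`:
`kG` is a subalgebra (with the same unit), the group-action relations
`g·v = (ᵍv)·g + λ(g ⊗ v)` deforming `R'` by `λ`, and the quadratic Koszul relations
`r = α(r) + β(r)` for `r ∈ R`. -/
inductive GRel (lam : MonoidAlgebra k G ⊗[k] V →ₗ[k] MonoidAlgebra k G)
    (α : R →ₗ[k] (V ⊗[k] MonoidAlgebra k G))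
    (β : R →ₗ[k] MonoidAlgebra k G) :
    FreeAlg k G V → FreeAlg k G V → Prop
  | unit : GRel lam α β (gIn k G V 1) 1
  | gmul (x y : MonoidAlgebra k G) :
      GRel lam α β (gIn k G V x * gIn k G V y) (gIn k G V (x * y))
  | act (g : G) (v : V) :
      GRel lam α β (gIn k G V (MonoidAlgebra.of k G g) * vIn k G V v)
        (vIn k G V (ρ g v) * gIn k G V (MonoidAlgebra.of k G g)
          + gIn k G V (lam (MonoidAlgebra.of k G g ⊗ₜ[k] v)))
  | quad (r : R) :
      GRel lam α β (mulVV k G V (r : V ⊗[k] V))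
        (embVG k G V (α r) + gIn k G V (β r))

variable (lam : MonoidAlgebra k G ⊗[k] V →ₗ[k] MonoidAlgebra k G)
    (α : R →ₗ[k] (V ⊗[k] MonoidAlgebra k G))
    (β : R →ₗ[k] MonoidAlgebra k G)

/-- The algebra `H_{λ,α,β}`.  For `lam = 0`, `α = 0`, `β = 0` this is (the presentation
of) the skew group algebra `S ⋊ G`, where `S = T(V)/(R)`. -/
abbrev HAlg := RingQuot (GRel k G V R ρ lam α β)

/-- The quotient map onto `H_{λ,α,β}`. -/
def toH : FreeAlg k G V →ₐ[k] HAlg k G V R ρ lam α β :=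
  RingQuot.mkAlgHom k (GRel k G V R ρ lam α β)

/-- Degree-`n` part of the free algebra: `kG` has degree 0 and `V` degree 1. -/
def grT : ℕ → Submodule k (FreeAlg k G V)
  | 0 => Subalgebra.toSubmodule (Algebra.adjoin k (Set.range (gIn k G V)))
  | n+1 => grT n * (LinearMap.range (vIn k G V) * grT 0)

/-- Filtration of the free algebra, `kG` in degree 0 and `V` in degree 1. -/
def filtT : ℕ → Submodule k (FreeAlg k G V)
  | 0 => grT k G V 0
  | n+1 => filtT n ⊔ grT k G V (n+1)

/-- The induced filtration on `H_{λ,α,β}`. -/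
def filtH (d : ℕ) : Submodule k (HAlg k G V R ρ lam α β) :=
  (filtT k G V d).map (toH k G V R ρ lam α β).toLinearMap

/-- `H_{λ,α,β}` is a **PBW deformation** of `S ⋊ G`:  the associated graded algebra is
`S ⋊ G`, equivalently (all filtered pieces being finite dimensional) each filtered
piece has the same dimension as the corresponding one of `S ⋊ G = H_{0,0,0}`. -/
def IsPBW : Prop :=
  ∀ d, Module.finrank k (filtH k G V R ρ lam α β d)
    = Module.finrank k (filtH k G V R ρ 0 0 0 d)

/-! ### The skew group algebra and auxiliary maps -/

/-- The skew group algebra `S ⋊ G`, presented as `H_{0,0,0}`. -/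
abbrev SkewA := HAlg k G V R ρ 0 0 0

/-- The image of `kG` in `S ⋊ G`. -/
def gA : MonoidAlgebra k G →ₗ[k] SkewA k G V R ρ :=
  (toH k G V R ρ 0 0 0).toLinearMap.comp (gIn k G V)

/-- The image of `V` in `S ⋊ G`. -/
def vA : V →ₗ[k] SkewA k G V R ρ :=
  (toH k G V R ρ 0 0 0).toLinearMap.comp (vIn k G V)

/-- `g`, as an element of the group algebra. -/
def ofg (g : G) : MonoidAlgebra k G := MonoidAlgebra.of k G g

/-- The twist map `σ : kG ⊗ V → V ⊗ kG`, `g ⊗ v ↦ ᵍv ⊗ g`. -/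
def sigma : MonoidAlgebra k G ⊗[k] V →ₗ[k] V ⊗[k] MonoidAlgebra k G :=
  TensorProduct.lift
    (((Finsupp.lift (V →ₗ[k] (V ⊗[k] MonoidAlgebra k G)) k G
      (fun g => ((TensorProduct.mk k V (MonoidAlgebra k G)).flip (MonoidAlgebra.of k G g)).comp
        (ρ g))).comp (MonoidAlgebra.coeffLinearEquiv k).toLinearMap :
      MonoidAlgebra k G →ₗ[k] (V →ₗ[k] (V ⊗[k] MonoidAlgebra k G))))

/-- `λ(g ⊗ -) : V → kG` for fixed `g`. -/
def lamMk (g : G) : V →ₗ[k] MonoidAlgebra k G :=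
  lam.comp ((TensorProduct.mk k (MonoidAlgebra k G) V) (MonoidAlgebra.of k G g))

variable (hR : ∀ (g : G) (x : V ⊗[k] V), x ∈ R → TensorProduct.map (ρ g) (ρ g) x ∈ R)

/-- The diagonal action of `g` on `R ⊆ V ⊗ V`. -/
def rActR (g : G) : R →ₗ[k] R :=
  (TensorProduct.map (ρ g) (ρ g)).restrict (fun x hx => hR g x hx)

/-- Multiplication `V ⊗ kG → S ⋊ G`. -/
def embVGA : V ⊗[k] MonoidAlgebra k G →ₗ[k] SkewA k G V R ρ :=
  (LinearMap.mul' k _).comp (TensorProduct.map (vA k G V R ρ) (gA k G V R ρ))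

/-- Multiplication `kG ⊗ V → S ⋊ G`. -/
def embGVA : MonoidAlgebra k G ⊗[k] V →ₗ[k] SkewA k G V R ρ :=
  (LinearMap.mul' k _).comp (TensorProduct.map (gA k G V R ρ) (vA k G V R ρ))

/-- Multiplication `(V ⊗ kG) ⊗ V → S ⋊ G`. -/
def embVGVA : (V ⊗[k] MonoidAlgebra k G) ⊗[k] V →ₗ[k] SkewA k G V R ρ :=
  (LinearMap.mul' k _).comp (TensorProduct.map (embVGA k G V R ρ) (vA k G V R ρ))

/-- Multiplication `V ⊗ (V ⊗ kG) → S ⋊ G`. -/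
def embVVGA : V ⊗[k] (V ⊗[k] MonoidAlgebra k G) →ₗ[k] SkewA k G V R ρ :=
  (LinearMap.mul' k _).comp (TensorProduct.map (vA k G V R ρ) (embVGA k G V R ρ))

/-- The inclusion `R ⊗ V → V ⊗ (V ⊗ V)`. -/
def inclRV : (R : Submodule k (V ⊗[k] V)) ⊗[k] V →ₗ[k] V ⊗[k] (V ⊗[k] V) :=
  (TensorProduct.assoc k V V V).toLinearMap.comp
    (TensorProduct.map R.subtype LinearMap.id)

/-- The inclusion `V ⊗ R → V ⊗ (V ⊗ V)`. -/
def inclVR : V ⊗[k] (R : Submodule k (V ⊗[k] V)) →ₗ[k] V ⊗[k] (V ⊗[k] V) :=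
  TensorProduct.map LinearMap.id R.subtype

/-- The inclusion `R ⊗ kG → V ⊗ (V ⊗ kG)`. -/
def inclRG : (R : Submodule k (V ⊗[k] V)) ⊗[k] MonoidAlgebra k G →ₗ[k]
    V ⊗[k] (V ⊗[k] MonoidAlgebra k G) :=
  (TensorProduct.assoc k V V (MonoidAlgebra k G)).toLinearMap.comp
    (TensorProduct.map R.subtype LinearMap.id)

/-- `((1 ⊗ σ)(α ⊗ 1) − 1 ⊗ α)(x)`, computed from the two presentations
`x₁ ∈ R ⊗ V` and `x₂ ∈ V ⊗ R` of an element `x ∈ (R ⊗ V) ∩ (V ⊗ R)`. -/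
def Theta (x₁ : (R : Submodule k (V ⊗[k] V)) ⊗[k] V)
    (x₂ : V ⊗[k] (R : Submodule k (V ⊗[k] V))) : V ⊗[k] (V ⊗[k] MonoidAlgebra k G) :=
  (TensorProduct.map LinearMap.id (sigma k G V ρ))
      ((TensorProduct.assoc k V (MonoidAlgebra k G) V)
        ((TensorProduct.map α LinearMap.id) x₁))
    - (TensorProduct.map LinearMap.id α) x₂

/-- The extension of `α` to a right `kG`-module map `R ⊗ kG → V ⊗ kG`. -/
def αext : (R : Submodule k (V ⊗[k] V)) ⊗[k] MonoidAlgebra k G →ₗ[k]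
    V ⊗[k] MonoidAlgebra k G :=
  (TensorProduct.map LinearMap.id (LinearMap.mul' k (MonoidAlgebra k G))).comp
    (((TensorProduct.assoc k V (MonoidAlgebra k G) (MonoidAlgebra k G)).toLinearMap).comp
      (TensorProduct.map α LinearMap.id))

/-- The extension of `β` to a right `kG`-module map `R ⊗ kG → kG`. -/
def βext : (R : Submodule k (V ⊗[k] V)) ⊗[k] MonoidAlgebra k G →ₗ[k] MonoidAlgebra k G :=
  (LinearMap.mul' k (MonoidAlgebra k G)).comp (TensorProduct.map β LinearMap.id)

/-- The `g`-component `α_g : R → V` of `α`. -/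
def αComp (g : G) : (R : Submodule k (V ⊗[k] V)) →ₗ[k] V :=
  ((TensorProduct.rid k V).toLinearMap.comp
    (TensorProduct.map LinearMap.id ((Finsupp.lapply g).comp
      (MonoidAlgebra.coeffLinearEquiv k).toLinearMap))).comp α

/-- `Σ_{g ∈ G} α_g ⊗ λ(g ⊗ −)`, as a map `R ⊗ V → S ⋊ G`. -/
def sumAlphaLam [Fintype G] : (R : Submodule k (V ⊗[k] V)) ⊗[k] V →ₗ[k] SkewA k G V R ρ :=
  ∑ g : G, (embVGA k G V R ρ).comp
    (TensorProduct.map (αComp k G V R α g) (lamMk k G V lam g))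

end DeformKoszul

open DeformKoszul

set_option linter.unusedSectionVars false

set_option linter.unusedSectionVars false

section PartOne

variable {k G V : Type} [Field k] [Group G] [AddCommGroup V] [Module k V]
variable {A : Type} [Ring A] [Algebra k A]
variable (gm : MonoidAlgebra k G →ₗ[k] A) (vm : V →ₗ[k] A)
variable (ρ : Representation k G V)
variable (lam : MonoidAlgebra k G ⊗[k] V →ₗ[k] MonoidAlgebra k G)

def mVG : V ⊗[k] MonoidAlgebra k G →ₗ[k] A :=
  (LinearMap.mul' k A).comp (TensorProduct.map vm gm)

def mVV : V ⊗[k] V →ₗ[k] A :=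
  (LinearMap.mul' k A).comp (TensorProduct.map vm vm)

def mVVG : V ⊗[k] (V ⊗[k] MonoidAlgebra k G) →ₗ[k] A :=
  (LinearMap.mul' k A).comp (TensorProduct.map vm (mVG gm vm))

@[simp] lemma mVG_tmul (v : V) (a : MonoidAlgebra k G) :
    mVG gm vm (v ⊗ₜ a) = vm v * gm a := by simp [mVG]

@[simp] lemma mVV_tmul (v w : V) : mVV (k := k) vm (v ⊗ₜ w) = vm v * vm w := by simp [mVV]

@[simp] lemma mVVG_tmul (v : V) (s : V ⊗[k] MonoidAlgebra k G) :
    mVVG gm vm (v ⊗ₜ s) = vm v * mVG gm vm s := by simp [mVVG]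

structure ActRel : Prop where
  one : gm 1 = 1
  mul : ∀ x y, gm (x * y) = gm x * gm y
  act : ∀ g v, gm (MonoidAlgebra.of k G g) * vm v
    = vm (ρ g v) * gm (MonoidAlgebra.of k G g) + gm (lam (MonoidAlgebra.of k G g ⊗ₜ[k] v))

lemma kG_ind {P : MonoidAlgebra k G → Prop} (a : MonoidAlgebra k G)
    (h1 : ∀ g, P (MonoidAlgebra.of k G g)) (h2 : ∀ x y, P x → P y → P (x + y))
    (h3 : ∀ (c : k) x, P x → P (c • x)) : P a :=
  MonoidAlgebra.induction_on a h1 h2 h3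

@[simp] lemma sigma_of (g : G) (v : V) :
    sigma k G V ρ (MonoidAlgebra.of k G g ⊗ₜ[k] v) = ρ g v ⊗ₜ MonoidAlgebra.of k G g := by
  simp [sigma]

def lact (g : G) : V ⊗[k] MonoidAlgebra k G →ₗ[k] V ⊗[k] MonoidAlgebra k G :=
  TensorProduct.map (ρ g) (LinearMap.mulLeft k (MonoidAlgebra.of k G g))

def ract (a : MonoidAlgebra k G) : V ⊗[k] MonoidAlgebra k G →ₗ[k] V ⊗[k] MonoidAlgebra k G :=
  TensorProduct.map LinearMap.id (LinearMap.mulRight k a)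

def c3 (g : G) : V ⊗[k] V →ₗ[k] V ⊗[k] MonoidAlgebra k G :=
  (sigma k G V ρ).comp (TensorProduct.map (lamMk k G V lam g) LinearMap.id)
    + TensorProduct.map (ρ g) (lamMk k G V lam g)

def c2 (g : G) : V ⊗[k] V →ₗ[k] MonoidAlgebra k G :=
  lam.comp (TensorProduct.map (lamMk k G V lam g) LinearMap.id)

variable {gm vm ρ lam} (h : ActRel gm vm ρ lam)
include h

lemma ActRel.act' (a : MonoidAlgebra k G) (w : V) :
    gm a * vm w = mVG gm vm (sigma k G V ρ (a ⊗ₜ w)) + gm (lam (a ⊗ₜ w)) := by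
  induction a using kG_ind with
  | h1 g => rw [sigma_of, mVG_tmul]; exact h.act g w
  | h2 x y hx hy => simp only [map_add, add_mul, add_tmul, hx, hy]; abel
  | h3 c x hx => 
    simp only [map_smul, smul_mul_assoc, ← TensorProduct.smul_tmul', hx, smul_add]

lemma ActRel.I2 (g : G) (t : V ⊗[k] V) :
    gm (MonoidAlgebra.of k G g) * mVV vm t
      = mVV vm (TensorProduct.map (ρ g) (ρ g) t) * gm (MonoidAlgebra.of k G g)
        + mVG gm vm (c3 ρ lam g t) + gm (c2 lam g t) := by
  induction t using TensorProduct.induction_on with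
  | zero => simp
  | add x y hx hy => simp only [map_add, mul_add, add_mul, hx, hy]; abel
  | tmul v w =>
    simp only [mVV_tmul, ← mul_assoc, h.act, add_mul, TensorProduct.map_tmul, c3, c2,
      LinearMap.add_apply, LinearMap.comp_apply, LinearMap.id_apply, map_add, mVG_tmul]
    rw [mul_assoc (vm _) (gm _) (vm w), h.act, mul_add, h.act' (lam _) w]
    simp only [lamMk, LinearMap.comp_apply, TensorProduct.mk_apply, mul_assoc]
    abel

lemma ActRel.I2' (g : G) (s : V ⊗[k] MonoidAlgebra k G) :
    gm (MonoidAlgebra.of k G g) * mVG gm vm s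
      = mVG gm vm (lact ρ g s)
        + gm (LinearMap.mul' k _ (TensorProduct.map (lamMk k G V lam g) LinearMap.id s)) := by
  induction s using TensorProduct.induction_on with
  | zero => simp
  | add x y hx hy => simp only [map_add, mul_add, hx, hy]; abel
  | tmul v a =>
    simp only [mVG_tmul, ← mul_assoc, h.act, add_mul, TensorProduct.map_tmul, lact,
      LinearMap.id_apply, lamMk, LinearMap.comp_apply, TensorProduct.mk_apply,
      LinearMap.mul'_apply, LinearMap.mulLeft_apply, h.mul]

lemma ActRel.I2'' (a : MonoidAlgebra k G) (s : V ⊗[k] MonoidAlgebra k G) :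
    mVG gm vm s * gm a = mVG gm vm (ract a s) := by
  induction s using TensorProduct.induction_on with
  | zero => simp
  | add x y hx hy => simp only [map_add, add_mul, hx, hy]
  | tmul v b => simp [ract, h.mul, mul_assoc]

lemma ActRel.I4 (s : V ⊗[k] MonoidAlgebra k G) (w : V) :
    mVG gm vm s * vm w
      = mVVG gm vm (TensorProduct.map LinearMap.id (sigma k G V ρ)
          (TensorProduct.assoc k V (MonoidAlgebra k G) V (s ⊗ₜ w)))
        + mVG gm vm (TensorProduct.map LinearMap.id lam
          (TensorProduct.assoc k V (MonoidAlgebra k G) V (s ⊗ₜ w))) := by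
  induction s using TensorProduct.induction_on with
  | zero => simp
  | add x y hx hy => simp only [map_add, add_mul, add_tmul, hx, hy]; abel
  | tmul v b => simp [mul_assoc, h.act', mul_add]

end PartOne

section PartTwo

lemma tmap_sub_left {k A B C D : Type} [CommRing k] [AddCommGroup A] [AddCommGroup B]
    [AddCommGroup C] [AddCommGroup D] [Module k A] [Module k B] [Module k C] [Module k D]
    (f f' : A →ₗ[k] C) (g : B →ₗ[k] D) (x : A ⊗[k] B) :
    TensorProduct.map (f - f') g x = TensorProduct.map f g x - TensorProduct.map f' g x := by
  induction x using TensorProduct.induction_on with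
  | zero => simp
  | add x y hx hy => simp only [map_add, hx, hy]; abel
  | tmul a b => simp [TensorProduct.sub_tmul]

lemma tmap_sub_right {k A B C D : Type} [CommRing k] [AddCommGroup A] [AddCommGroup B]
    [AddCommGroup C] [AddCommGroup D] [Module k A] [Module k B] [Module k C] [Module k D]
    (f : A →ₗ[k] C) (g g' : B →ₗ[k] D) (x : A ⊗[k] B) :
    TensorProduct.map f (g - g') x = TensorProduct.map f g x - TensorProduct.map f g' x := by
  induction x using TensorProduct.induction_on with
  | zero => simp
  | add x y hx hy => simp only [map_add, hx, hy]; abel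
  | tmul a b => simp [TensorProduct.tmul_sub]

variable {k G V : Type} [Field k] [Group G] [AddCommGroup V] [Module k V]
variable {A : Type} [Ring A] [Algebra k A]
variable (gm : MonoidAlgebra k G →ₗ[k] A) (vm : V →ₗ[k] A)
variable (ρ : Representation k G V) (R : Submodule k (V ⊗[k] V))
variable (hR : ∀ (g : G) (x : V ⊗[k] V), x ∈ R → TensorProduct.map (ρ g) (ρ g) x ∈ R)
variable (lam : MonoidAlgebra k G ⊗[k] V →ₗ[k] MonoidAlgebra k G)
    (α : R →ₗ[k] (V ⊗[k] MonoidAlgebra k G))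
    (β : R →ₗ[k] MonoidAlgebra k G)

def Aterm (x₁ : (R : Submodule k (V ⊗[k] V)) ⊗[k] V)
    (x₂ : V ⊗[k] (R : Submodule k (V ⊗[k] V))) : V ⊗[k] MonoidAlgebra k G :=
  TensorProduct.map LinearMap.id lam
      (TensorProduct.assoc k V (MonoidAlgebra k G) V (TensorProduct.map α LinearMap.id x₁))
    + sigma k G V ρ (TensorProduct.map β LinearMap.id x₁)
    - TensorProduct.map LinearMap.id β x₂

structure Cond : Prop where
  c1 : ∀ (g h : G) (v : V), lam ((MonoidAlgebra.of k G g * MonoidAlgebra.of k G h) ⊗ₜ v)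
    = MonoidAlgebra.of k G g * lam (MonoidAlgebra.of k G h ⊗ₜ v)
      + lam (MonoidAlgebra.of k G g ⊗ₜ ρ h v) * MonoidAlgebra.of k G h
  c2 : ∀ (g : G) (r : R), MonoidAlgebra.of k G g * β r
      + LinearMap.mul' k _ (TensorProduct.map (lamMk k G V lam g) LinearMap.id (α r))
    = β (rActR k G V R ρ hR g r) * MonoidAlgebra.of k G g + c2 lam g r
  c3 : ∀ (g : G) (r : R), lact ρ g (α r)
    = ract (MonoidAlgebra.of k G g) (α (rActR k G V R ρ hR g r)) + c3 ρ lam g r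
  c4 : ∀ (x₁ : (R : Submodule k (V ⊗[k] V)) ⊗[k] V)
    (x₂ : V ⊗[k] (R : Submodule k (V ⊗[k] V))), inclRV k V R x₁ = inclVR k V R x₂ →
    ∃ y, inclRG k G V R y = Theta k G V R ρ α x₁ x₂ ∧
      αext k G V R α y + Aterm ρ R lam α β x₁ x₂ = 0 ∧
      βext k G V R β y + lam (TensorProduct.map β LinearMap.id x₁) = 0

lemma cond_zero : Cond ρ R hR (0 : MonoidAlgebra k G ⊗[k] V →ₗ[k] MonoidAlgebra k G) 0 0 where
  c1 := by simp
  c2 := by simp [c2]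
  c3 := by
    intro g r
    have : lamMk k G V (0 : MonoidAlgebra k G ⊗[k] V →ₗ[k] MonoidAlgebra k G) g = 0 := by
      simp [lamMk]
    simp [c3, this]
  c4 := fun x₁ x₂ _ => ⟨0, by simp [Theta, Aterm]⟩

def gam : R →ₗ[k] A := (mVG gm vm).comp α + gm.comp β

def qR : R →ₗ[k] A := (mVV vm).comp R.subtype - gam gm vm R α β

lemma gam_apply (r : R) : gam gm vm R α β r = mVG gm vm (α r) + gm (β r) := rfl

lemma qR_apply (r : R) :
  qR gm vm R α β r = mVV vm (r : V ⊗[k] V) - gam gm vm R α β r := rfl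

lemma tri (x₁ : (R : Submodule k (V ⊗[k] V)) ⊗[k] V)
    (x₂ : V ⊗[k] (R : Submodule k (V ⊗[k] V))) (hx : inclRV k V R x₁ = inclVR k V R x₂) :
    LinearMap.mul' k A (TensorProduct.map ((mVV vm).comp R.subtype) vm x₁)
      = LinearMap.mul' k A (TensorProduct.map vm ((mVV vm).comp R.subtype) x₂) := by
  have e1 : (LinearMap.mul' k A).comp (TensorProduct.map ((mVV vm).comp R.subtype) vm)
      = ((LinearMap.mul' k A).comp (TensorProduct.map vm (mVV vm))).comp (inclRV k V R) := by
    ext r v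
    simp only [AlgebraTensorModule.curry_apply, LinearMap.restrictScalars_self, curry_apply,
      LinearMap.comp_apply, TensorProduct.map_tmul, inclRV, LinearEquiv.coe_coe,
      LinearMap.id_apply, LinearMap.mul'_apply, Submodule.subtype_apply]
    induction (r : V ⊗[k] V) using TensorProduct.induction_on with
    | zero => simp
    | add x y hx hy => simp only [map_add, add_mul, add_tmul, hx, hy]
    | tmul a b => simp [mul_assoc]
  have e2 : (LinearMap.mul' k A).comp (TensorProduct.map vm ((mVV vm).comp R.subtype))
      = ((LinearMap.mul' k A).comp (TensorProduct.map vm (mVV vm))).comp (inclVR k V R) := by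
    ext v r
    simp [inclVR]
  have h1 := LinearMap.congr_fun e1 x₁
  have h2 := LinearMap.congr_fun e2 x₂
  simp only [LinearMap.comp_apply] at h1 h2
  rw [h1, h2, hx]

variable {gm vm ρ lam} (h : ActRel gm vm ρ lam)
include h

lemma ActRel.I5a (x₁ : (R : Submodule k (V ⊗[k] V)) ⊗[k] V) :
    LinearMap.mul' k A (TensorProduct.map (gam gm vm R α β) vm x₁)
     = mVVG gm vm (TensorProduct.map LinearMap.id (sigma k G V ρ)
          (TensorProduct.assoc k V (MonoidAlgebra k G) V (TensorProduct.map α LinearMap.id x₁)))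
        + mVG gm vm (TensorProduct.map LinearMap.id lam
          (TensorProduct.assoc k V (MonoidAlgebra k G) V (TensorProduct.map α LinearMap.id x₁)))
        + (mVG gm vm (sigma k G V ρ (TensorProduct.map β LinearMap.id x₁))
        + gm (lam (TensorProduct.map β LinearMap.id x₁))) := by
  induction x₁ using TensorProduct.induction_on with
  | zero => simp
  | add x y hx hy => simp only [map_add, hx, hy]; abel
  | tmul r v =>
    simp only [TensorProduct.map_tmul, LinearMap.mul'_apply, gam_apply, LinearMap.id_apply,
      add_mul, h.act', h.I4]

lemma ActRel.I5b (x₂ : V ⊗[k] (R : Submodule k (V ⊗[k] V))) :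
    LinearMap.mul' k A (TensorProduct.map vm (gam gm vm R α β) x₂)
     = mVVG gm vm (TensorProduct.map LinearMap.id α x₂)
        + mVG gm vm (TensorProduct.map LinearMap.id β x₂) := by
  induction x₂ using TensorProduct.induction_on with
  | zero => simp
  | add x y hx hy => simp only [map_add, hx, hy]; abel
  | tmul v r => simp [gam_apply, mul_add]

lemma ActRel.I5 (x₁ : (R : Submodule k (V ⊗[k] V)) ⊗[k] V)
    (x₂ : V ⊗[k] (R : Submodule k (V ⊗[k] V))) :
    LinearMap.mul' k A (TensorProduct.map (gam gm vm R α β) vm x₁)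
     - LinearMap.mul' k A (TensorProduct.map vm (gam gm vm R α β) x₂)
     = mVVG gm vm (Theta k G V R ρ α x₁ x₂) + mVG gm vm (Aterm ρ R lam α β x₁ x₂)
      + gm (lam (TensorProduct.map β LinearMap.id x₁)) := by
  rw [h.I5a, h.I5b]
  simp only [Theta, Aterm, map_add, map_sub]
  abel

lemma ActRel.I6a (y : (R : Submodule k (V ⊗[k] V)) ⊗[k] MonoidAlgebra k G) :
    LinearMap.mul' k A (TensorProduct.map ((mVV vm).comp R.subtype) gm y)
      = mVVG gm vm (inclRG k G V R y) := by
  induction y using TensorProduct.induction_on with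
  | zero => simp
  | add x y hx hy => simp only [map_add, hx, hy]
  | tmul r a =>
    simp only [LinearMap.comp_apply, TensorProduct.map_tmul, inclRG, LinearEquiv.coe_coe,
      LinearMap.id_apply, LinearMap.mul'_apply, Submodule.subtype_apply]
    induction (r : V ⊗[k] V) using TensorProduct.induction_on with
    | zero => simp
    | add x y hx hy => simp only [map_add, add_mul, add_tmul, hx, hy]
    | tmul b c => simp [mul_assoc]

lemma ActRel.I6b (y : (R : Submodule k (V ⊗[k] V)) ⊗[k] MonoidAlgebra k G) :
    LinearMap.mul' k A (TensorProduct.map (gam gm vm R α β) gm y)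
      = mVG gm vm (αext k G V R α y) + gm (βext k G V R β y) := by
  induction y using TensorProduct.induction_on with
  | zero => simp
  | add x y hx hy => simp only [map_add, hx, hy]; abel
  | tmul r a =>
    simp only [TensorProduct.map_tmul, LinearMap.mul'_apply, gam_apply, add_mul, h.I2'',
      βext, LinearMap.comp_apply, LinearMap.id_apply, h.mul, αext, LinearEquiv.coe_coe]
    congr 2
    induction (α r) using TensorProduct.induction_on with
    | zero => simp
    | add x y hx hy => simp only [map_add, add_tmul, hx, hy]
    | tmul b c => simp [ract]

lemma ActRel.overlap (hc : Cond ρ R hR lam α β) (x₁ : (R : Submodule k (V ⊗[k] V)) ⊗[k] V)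
    (x₂ : V ⊗[k] (R : Submodule k (V ⊗[k] V))) (hx : inclRV k V R x₁ = inclVR k V R x₂) :
    ∃ y, LinearMap.mul' k A (TensorProduct.map (qR gm vm R α β) vm x₁)
      - LinearMap.mul' k A (TensorProduct.map vm (qR gm vm R α β) x₂)
      = - LinearMap.mul' k A (TensorProduct.map (qR gm vm R α β) gm y) := by
  obtain ⟨y, h1, h2, h3⟩ := hc.c4 x₁ x₂ hx
  refine ⟨y, ?_⟩
  have t := tri (A := A) vm R x₁ x₂ hx
  have i5 := h.I5 R α β x₁ x₂
  have a := h.I6a R y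
  have b := h.I6b R α β y
  rw [h1] at a
  rw [eq_neg_of_add_eq_zero_left h2, eq_neg_of_add_eq_zero_left h3] at b
  simp only [qR, tmap_sub_left, tmap_sub_right,
    map_sub, a, b, t]
  rw [sub_sub_sub_cancel_left, ← neg_sub, i5]
  simp only [map_neg]
  abel

lemma ActRel.gq (hc : Cond ρ R hR lam α β) (g : G) (r : R) :
    gm (MonoidAlgebra.of k G g) * qR gm vm R α β r
      = qR gm vm R α β (rActR k G V R ρ hR g r) * gm (MonoidAlgebra.of k G g) := by
  simp only [qR_apply, gam_apply, mul_sub, sub_mul, mul_add, add_mul, h.I2, h.I2', h.I2'', hc.c3,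
    ← h.mul, map_add]
  have e := congrArg gm (hc.c2 g r)
  simp only [map_add] at e
  have : ((rActR k G V R ρ hR g r : R) : V ⊗[k] V) = TensorProduct.map (ρ g) (ρ g) r := rfl
  rw [this]
  rw [← sub_eq_zero] at e ⊢
  rw [← neg_eq_zero, ← e]
  abel

end PartTwo

section PartThree

variable (k G V : Type) [Field k] [Group G] [AddCommGroup V] [Module k V]

def EE : ℕ → ModuleCat.{0} k
  | 0 => ModuleCat.of k (MonoidAlgebra k G)
  | n+1 => ModuleCat.of k (V ⊗[k] (EE n))

def E0 : MonoidAlgebra k G ≃ₗ[k] EE k G V 0 := LinearEquiv.refl k (MonoidAlgebra k G)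

def ES (n : ℕ) : V ⊗[k] (EE k G V n) ≃ₗ[k] EE k G V (n+1) :=
  LinearEquiv.refl k (V ⊗[k] (EE k G V n))

abbrev MM := DirectSum ℕ (fun n => EE k G V n)

def lo (n : ℕ) : EE k G V n →ₗ[k] MM k G V := DirectSum.lof k ℕ (fun n => EE k G V n) n

def vM : V →ₗ[k] Module.End k (MM k G V) :=
  (DirectSum.toModule k ℕ (V →ₗ[k] MM k G V) (fun n =>
    ((TensorProduct.mk k V (EE k G V n)).compr₂
      ((lo k G V (n+1)).comp (ES k G V n).toLinearMap)).flip)).flip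

@[simp] lemma vM_lo (v : V) (n : ℕ) (u : EE k G V n) :
    vM k G V v (lo k G V n u) = lo k G V (n+1) (ES k G V n (v ⊗ₜ u)) := by
  simp [vM, lo, DirectSum.toModule_lof]

variable {k G V}
variable (ρ : Representation k G V)
variable (lam : MonoidAlgebra k G ⊗[k] V →ₗ[k] MonoidAlgebra k G)

def stepB {X M : Type} [AddCommGroup X] [Module k X] [AddCommGroup M] [Module k M]
    (vm : V →ₗ[k] Module.End k M)
    (f : MonoidAlgebra k G →ₗ[k] X →ₗ[k] M) : V ⊗[k] MonoidAlgebra k G →ₗ[k] (X →ₗ[k] M) :=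
  TensorProduct.lift ((((LinearMap.llcomp k X M M :
    (M →ₗ[k] M) →ₗ[k] (X →ₗ[k] M) →ₗ[k] (X →ₗ[k] M))).comp vm).compl₂ f)

lemma stepB_tmul {X M : Type} [AddCommGroup X] [Module k X] [AddCommGroup M] [Module k M]
    (vm : V →ₗ[k] Module.End k M)
    (f : MonoidAlgebra k G →ₗ[k] X →ₗ[k] M) (v : V) (a : MonoidAlgebra k G) (x : X) :
    stepB vm f (v ⊗ₜ a) x = vm v (f a x) := by
  simp [stepB]

def stepAct {X M : Type} [AddCommGroup X] [Module k X] [AddCommGroup M] [Module k M]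
    (vm : V →ₗ[k] Module.End k M)
    (f : MonoidAlgebra k G →ₗ[k] X →ₗ[k] M) : MonoidAlgebra k G →ₗ[k] (V ⊗[k] X →ₗ[k] M) :=
  (TensorProduct.uncurry (RingHom.id k) V X M).comp
    (TensorProduct.curry ((stepB vm f).comp (sigma k G V ρ) + f.comp lam))

lemma stepAct_tmul {X M : Type} [AddCommGroup X] [Module k X] [AddCommGroup M] [Module k M]
    (vm : V →ₗ[k] Module.End k M)
    (f : MonoidAlgebra k G →ₗ[k] X →ₗ[k] M) (g : G) (v : V) (x : X) :
    stepAct ρ lam vm f (MonoidAlgebra.of k G g) (v ⊗ₜ x) =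
      vm (ρ g v) (f (MonoidAlgebra.of k G g) x) + f (lam (MonoidAlgebra.of k G g ⊗ₜ v)) x := by
  rw [stepAct, LinearMap.comp_apply, TensorProduct.uncurry_apply, TensorProduct.curry_apply,
    LinearMap.add_apply, LinearMap.comp_apply, sigma_of, LinearMap.add_apply, stepB_tmul]
  rfl

def actn : (n : ℕ) → MonoidAlgebra k G →ₗ[k] EE k G V n →ₗ[k] MM k G V
  | 0 => ((LinearMap.mul k (MonoidAlgebra k G)).compr₂
      ((lo k G V 0).comp (E0 k G V).toLinearMap)).compl₂ (E0 k G V).symm.toLinearMap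
  | n+1 => (stepAct ρ lam (vM k G V) (actn n)).compl₂ (ES k G V n).symm.toLinearMap

def gM : MonoidAlgebra k G →ₗ[k] Module.End k (MM k G V) :=
  (DirectSum.toModule k ℕ (MonoidAlgebra k G →ₗ[k] MM k G V)
    (fun n => (actn ρ lam n).flip)).flip

lemma gM_lo (a : MonoidAlgebra k G) (n : ℕ) (u : EE k G V n) :
    gM ρ lam a (lo k G V n u) = actn ρ lam n a u := by
  simp [gM, lo, DirectSum.toModule_lof]

lemma gM_lo0 (a x : MonoidAlgebra k G) :
    gM ρ lam a (lo k G V 0 (E0 k G V x)) = lo k G V 0 (E0 k G V (a * x)) := by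
  rw [gM_lo]; simp [actn]

lemma M_ind {P : MM k G V → Prop} (m : MM k G V) (hz : P 0) (ha : ∀ x y, P x → P y → P (x + y))
    (hl : ∀ n u, P (lo k G V n u)) : P m := by
  induction m using DirectSum.induction_on with
  | zero => exact hz
  | of i x => exact hl i x
  | add x y hx hy => exact ha x y hx hy

lemma gM_vM (g : G) (v : V) :
    gM ρ lam (MonoidAlgebra.of k G g) * vM k G V v
      = vM k G V (ρ g v) * gM ρ lam (MonoidAlgebra.of k G g)
        + gM ρ lam (lam (MonoidAlgebra.of k G g ⊗ₜ v)) := by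
  refine LinearMap.ext fun m => ?_
  induction m using M_ind with
  | hz => simp
  | ha x y hx hy => rw [map_add, map_add, hx, hy]
  | hl n u =>
    simp only [Module.End.mul_apply, LinearMap.add_apply, vM_lo, gM_lo]
    rw [actn, LinearMap.compl₂_apply]
    simp only [LinearEquiv.coe_coe, LinearEquiv.symm_apply_apply]
    rw [stepAct_tmul]

lemma E_ind {n : ℕ} {P : EE k G V (n+1) → Prop} (u : EE k G V (n+1))
    (hz : P 0) (ha : ∀ x y, P x → P y → P (x + y))
    (ht : ∀ v w, P (ES k G V n (v ⊗ₜ w))) : P u := by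
  obtain ⟨t, rfl⟩ := (ES k G V n).surjective u
  induction t using TensorProduct.induction_on with
  | zero => simpa using hz
  | add x y hx hy => rw [map_add]; exact ha _ _ hx hy
  | tmul v w => exact ht v w

/-- induction on M via generation by `lo 0` and `vM`. -/
lemma M_ind' {P : MM k G V → Prop} (m : MM k G V) (hz : P 0)
    (ha : ∀ x y, P x → P y → P (x + y))
    (h0 : ∀ a, P (lo k G V 0 (E0 k G V a)))
    (hv : ∀ v m, P m → P (vM k G V v m)) : P m := by
  induction m using M_ind with
  | hz => exact hz
  | ha x y hx hy => exact ha x y hx hy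
  | hl n u =>
    induction n with
    | zero =>
      obtain ⟨a, rfl⟩ := (E0 k G V).surjective u
      exact h0 a
    | succ n ih =>
      induction u using E_ind with
      | hz => simpa using hz
      | ha x y hx hy => rw [map_add]; exact ha _ _ hx hy
      | ht v w => rw [← vM_lo]; exact hv _ _ (ih w)

variable {lam ρ}

lemma actRel_M (c1 : ∀ (g h : G) (v : V),
    lam ((MonoidAlgebra.of k G g * MonoidAlgebra.of k G h) ⊗ₜ v)
    = MonoidAlgebra.of k G g * lam (MonoidAlgebra.of k G h ⊗ₜ v)
      + lam (MonoidAlgebra.of k G g ⊗ₜ ρ h v) * MonoidAlgebra.of k G h) :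
    ActRel (gM ρ lam) (vM k G V) ρ lam := by
  refine ⟨?_, ?_, gM_vM ρ lam⟩
  · refine LinearMap.ext fun m => ?_
    induction m using M_ind' with
    | hz => simp
    | ha x y hx hy => rw [map_add, map_add, hx, hy]
    | h0 a => rw [gM_lo0]; simp
    | hv v m hm =>
      have h0 : lam ((1 : MonoidAlgebra k G) ⊗ₜ v) = 0 := by
        have := c1 1 1 v
        rw [map_one, map_one, mul_one, mul_one, one_mul, Module.End.one_apply] at this
        exact (left_eq_add.mp this)
      have := LinearMap.congr_fun (gM_vM ρ lam 1 v) m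
      rw [map_one (MonoidAlgebra.of k G), map_one ρ, h0, map_zero, add_zero] at this
      rw [Module.End.one_apply] at hm
      simp only [Module.End.mul_apply, Module.End.one_apply, hm] at this
      exact this
  · have key : ∀ m (a b : MonoidAlgebra k G), gM ρ lam (a * b) m
        = gM ρ lam a (gM ρ lam b m) := by
      intro m
      induction m using M_ind' with
      | hz => simp
      | ha x y hx hy => intro a b; simp only [map_add, hx, hy]
      | h0 x => intro a b; simp only [gM_lo0, mul_assoc]
      | hv v m hm =>
        intro a b
        induction a using kG_ind with
        | h2 x y hx hy => simp only [add_mul, map_add, LinearMap.add_apply, hx, hy]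
        | h3 c x hx => simp only [smul_mul_assoc, map_smul, LinearMap.smul_apply, hx]
        | h1 g =>
        induction b using kG_ind with
        | h2 x y hx hy => simp only [mul_add, map_add, LinearMap.add_apply, hx, hy]
        | h3 c x hx => simp only [mul_smul_comm, map_smul, LinearMap.smul_apply, hx]
        | h1 h =>
          have e : ∀ g v m, gM ρ lam (MonoidAlgebra.of k G g) (vM k G V v m)
              = vM k G V (ρ g v) (gM ρ lam (MonoidAlgebra.of k G g) m)
                + gM ρ lam (lam (MonoidAlgebra.of k G g ⊗ₜ v)) m :=
            fun g v m => LinearMap.congr_fun (gM_vM ρ lam g v) m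
          have c := c1 g h v
          rw [e h v, map_add, e g, ← hm, ← hm, ← hm, ← map_mul, e, map_mul, map_mul, c, map_add,
            LinearMap.add_apply, Module.End.mul_apply]
          abel
    intro a b
    refine LinearMap.ext fun m => ?_
    exact key m a b

end PartThree

section PartFour

variable (k G V : Type) [Field k] [Group G] [AddCommGroup V] [Module k V]

def FF (n : ℕ) : Submodule k (MM k G V) :=
  Submodule.span k {x | ∃ j ≤ n, ∃ u, x = lo k G V j u}

variable {k G V}

lemma FF_mono {n m : ℕ} (h : n ≤ m) : FF k G V n ≤ FF k G V m :=
  Submodule.span_mono fun _ ⟨j, hj, u, hu⟩ => ⟨j, hj.trans h, u, hu⟩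

lemma lo_mem (n : ℕ) (u : EE k G V n) : lo k G V n u ∈ FF k G V n :=
  Submodule.subset_span ⟨n, le_rfl, u, rfl⟩

lemma FF_exists (m : MM k G V) : ∃ n, m ∈ FF k G V n := by
  induction m using M_ind with
  | hz => exact ⟨0, zero_mem _⟩
  | ha x y hx hy =>
    obtain ⟨n, hn⟩ := hx
    obtain ⟨p, hp⟩ := hy
    exact ⟨max n p, add_mem (FF_mono (le_max_left _ _) hn) (FF_mono (le_max_right _ _) hp)⟩
  | hl n u => exact ⟨n, lo_mem n u⟩

lemma FF_le {n : ℕ} {S : Submodule k (MM k G V)} (h : ∀ j ≤ n, ∀ u, lo k G V j u ∈ S) :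
    FF k G V n ≤ S := by
  refine Submodule.span_le.2 ?_
  rintro x ⟨j, hj, u, rfl⟩
  exact h j hj u

lemma vM_FF {n : ℕ} (v : V) {m : MM k G V} (hm : m ∈ FF k G V n) :
    vM k G V v m ∈ FF k G V (n+1) := by
  have : FF k G V n ≤ (FF k G V (n+1)).comap (vM k G V v) := by
    refine FF_le fun j hj u => ?_
    rw [Submodule.mem_comap, vM_lo]
    exact FF_mono (by omega) (lo_mem _ _)
  exact this hm

lemma FF_zero {m : MM k G V} (hm : m ∈ FF k G V 0) : ∃ u, m = lo k G V 0 u := by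
  have : FF k G V 0 ≤ LinearMap.range (lo k G V 0) := by
    refine FF_le fun j hj u => ?_
    obtain rfl : j = 0 := by omega
    exact ⟨u, rfl⟩
  obtain ⟨u, hu⟩ := this hm
  exact ⟨u, hu.symm⟩

lemma FF_succ {n : ℕ} {m : MM k G V} (hm : m ∈ FF k G V (n+1)) :
    ∃ m' ∈ FF k G V n, ∃ u, m = m' + lo k G V (n+1) u := by
  have : FF k G V (n+1) ≤ FF k G V n ⊔ LinearMap.range (lo k G V (n+1)) := by
    refine FF_le fun j hj u => ?_
    rcases Nat.lt_or_ge n j with h | h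
    · obtain rfl : j = n + 1 := by omega
      exact Submodule.mem_sup_right ⟨u, rfl⟩
    · exact Submodule.mem_sup_left (FF_mono h (lo_mem _ _))
  obtain ⟨y, hy, z, ⟨u, rfl⟩, rfl⟩ := Submodule.mem_sup.1 (this hm)
  exact ⟨y, hy, u, rfl⟩

variable (k G V) in
def cpt (n : ℕ) : MM k G V →ₗ[k] EE k G V n := DirectSum.component k ℕ (fun n => EE k G V n) n

@[simp] lemma cpt_lo (n : ℕ) (u : EE k G V n) : cpt k G V n (lo k G V n u) = u := by
  simp [cpt, lo]

lemma cpt_lo_ne {n j : ℕ} (h : j ≠ n) (u : EE k G V j) : cpt k G V n (lo k G V j u) = 0 := by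
  simp only [cpt, lo, DirectSum.component.of]
  rw [dif_neg h]

lemma cpt_FF {n j : ℕ} (h : n < j) {m : MM k G V} (hm : m ∈ FF k G V n) :
    cpt k G V j m = 0 := by
  have : FF k G V n ≤ LinearMap.ker (cpt k G V j) := by
    refine FF_le fun i hi u => ?_
    exact cpt_lo_ne (by omega) u
  exact this hm

variable (ρ : Representation k G V) (R : Submodule k (V ⊗[k] V))
variable (lam : MonoidAlgebra k G ⊗[k] V →ₗ[k] MonoidAlgebra k G)
    (α : R →ₗ[k] (V ⊗[k] MonoidAlgebra k G))
    (β : R →ₗ[k] MonoidAlgebra k G)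

variable {n : ℕ} {m : MM k G V}

lemma gM_FF (a : MonoidAlgebra k G) (hm : m ∈ FF k G V n) : gM ρ lam a m ∈ FF k G V n := by
  have key : ∀ n a (u : EE k G V n), gM ρ lam a (lo k G V n u) ∈ FF k G V n := by
    intro n
    induction n with
    | zero =>
      intro a u
      obtain ⟨x, rfl⟩ := (E0 k G V).surjective u
      rw [gM_lo0]
      exact lo_mem _ _
    | succ n ih =>
      intro a u
      induction u using E_ind with
      | hz => simp
      | ha x y hx hy => rw [map_add, map_add]; exact add_mem hx hy
      | ht v w =>
        induction a using kG_ind with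
        | h2 x y hx hy => rw [map_add, LinearMap.add_apply]; exact add_mem hx hy
        | h3 c x hx => rw [map_smul, LinearMap.smul_apply]; exact Submodule.smul_mem _ _ hx
        | h1 g =>
          rw [← vM_lo, ← Module.End.mul_apply, gM_vM]
          exact add_mem (vM_FF _ (ih _ _)) (FF_mono (by omega) (ih _ _))
  have : FF k G V n ≤ (FF k G V n).comap (gM ρ lam a) :=
    FF_le fun j hj u => FF_mono hj (key j a u)
  exact this hm

abbrev qM : R →ₗ[k] Module.End k (MM k G V) := qR (gM ρ lam) (vM k G V) R α β

lemma mVG_st {S S' : Submodule k (MM k G V)} (h1 : ∀ a, ∀ m ∈ S, gM ρ lam a m ∈ S)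
    (h2 : ∀ v, ∀ m ∈ S, vM k G V v m ∈ S') (s : V ⊗[k] MonoidAlgebra k G) (hm : m ∈ S) :
    mVG (gM ρ lam) (vM k G V) s m ∈ S' := by
  induction s using TensorProduct.induction_on with
  | zero => simp
  | add x y hx hy => rw [map_add, LinearMap.add_apply]; exact add_mem hx hy
  | tmul v a => rw [mVG_tmul]; exact h2 v _ (h1 a _ hm)

lemma gam_st {S S' : Submodule k (MM k G V)} (hS : S ≤ S') (h1 : ∀ a, ∀ m ∈ S, gM ρ lam a m ∈ S)
    (h2 : ∀ v, ∀ m ∈ S, vM k G V v m ∈ S') (r : R) (hm : m ∈ S) :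
    gam (gM ρ lam) (vM k G V) R α β r m ∈ S' := by
  rw [gam_apply, LinearMap.add_apply]
  exact add_mem (mVG_st ρ lam h1 h2 _ hm) (hS (h1 _ _ hm))

lemma gam_FF (r : R) (hm : m ∈ FF k G V n) :
    gam (gM ρ lam) (vM k G V) R α β r m ∈ FF k G V (n+1) :=
  gam_st ρ R lam α β (FF_mono (by omega)) (fun a _ h => gM_FF ρ lam a h)
    (fun v _ h => vM_FF v h) r hm

lemma mVV_FF (t : V ⊗[k] V) (hm : m ∈ FF k G V n) :
    mVV (vM k G V) t m ∈ FF k G V (n+2) := by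
  induction t using TensorProduct.induction_on with
  | zero => simp
  | add x y hx hy => rw [map_add, LinearMap.add_apply]; exact add_mem hx hy
  | tmul v w => rw [mVV_tmul]; exact vM_FF _ (vM_FF _ hm)

lemma qM_FF (r : R) (hm : m ∈ FF k G V n) : qM ρ R lam α β r m ∈ FF k G V (n+2) := by
  rw [qR_apply, LinearMap.sub_apply]
  exact sub_mem (mVV_FF _ hm) (FF_mono (by omega) (gam_FF ρ R lam α β r hm))

def JJ : ℕ → Submodule k (MM k G V)
  | 0 => ⊥
  | 1 => ⊥
  | n+2 => Submodule.span k {x | ∃ r, ∃ m ∈ FF k G V n, x = qM ρ R lam α β r m}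
    ⊔ Submodule.span k {x | ∃ v, ∃ m ∈ JJ (n+1), x = vM k G V v m}

lemma q_JJ (r : R) (hm : m ∈ FF k G V n) : qM ρ R lam α β r m ∈ JJ ρ R lam α β (n+2) :=
  Submodule.mem_sup_left (Submodule.subset_span ⟨r, m, hm, rfl⟩)

lemma vM_JJ (v : V) (hm : m ∈ JJ ρ R lam α β n) : vM k G V v m ∈ JJ ρ R lam α β (n+1) := by
  rcases n with _ | n
  · have : m = 0 := hm
    rw [this, map_zero]; exact zero_mem _
  · exact Submodule.mem_sup_right (Submodule.subset_span ⟨v, m, hm, rfl⟩)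

lemma JJ_le {S : Submodule k (MM k G V)}
    (h1 : ∀ r, ∀ m ∈ FF k G V n, qM ρ R lam α β r m ∈ S)
    (h2 : ∀ v, ∀ m ∈ JJ ρ R lam α β (n+1), vM k G V v m ∈ S) : JJ ρ R lam α β (n+2) ≤ S := by
  refine sup_le (Submodule.span_le.2 ?_) (Submodule.span_le.2 ?_)
  · rintro x ⟨r, m, hm, rfl⟩; exact h1 r m hm
  · rintro x ⟨v, m, hm, rfl⟩; exact h2 v m hm

lemma JJ_le_FF (n : ℕ) : JJ ρ R lam α β n ≤ FF k G V n := by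
  induction n with
  | zero => exact bot_le
  | succ n ih =>
    rcases n with _ | n
    · exact bot_le
    · exact JJ_le ρ R lam α β (fun r m hm => qM_FF ρ R lam α β r hm) (fun v m hm => vM_FF v (ih hm))

lemma JJ_succ (n : ℕ) : JJ ρ R lam α β n ≤ JJ ρ R lam α β (n+1) := by
  induction n with
  | zero => exact bot_le
  | succ n ih =>
    rcases n with _ | n
    · exact bot_le
    · exact JJ_le ρ R lam α β (fun r m hm => q_JJ ρ R lam α β r (FF_mono (by omega) hm))
        (fun v m hm => vM_JJ ρ R lam α β v (ih hm))

lemma JJ_mono : Monotone (JJ ρ R lam α β) := monotone_nat_of_le_succ (JJ_succ ρ R lam α β)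

variable {ρ R lam α β}
variable {hR : ∀ (g : G) (x : V ⊗[k] V), x ∈ R → TensorProduct.map (ρ g) (ρ g) x ∈ R}

lemma gM_JJ (hc : Cond ρ R hR lam α β) (a : MonoidAlgebra k G) (hm : m ∈ JJ ρ R lam α β n) :
    gM ρ lam a m ∈ JJ ρ R lam α β n := by
  have hA := actRel_M hc.c1
  revert m; revert a
  suffices H : ∀ (m : MM k G V), m ∈ JJ ρ R lam α β n → ∀ a, gM ρ lam a m ∈ JJ ρ R lam α β n from
    fun a m hm => H m hm a
  induction n with
  | zero => intro m hm a; have : m = 0 := hm; rw [this, map_zero]; exact zero_mem _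
  | succ n ih =>
    rcases n with _ | n
    · intro m hm a; have : m = 0 := hm
      rw [this, map_zero]; exact zero_mem _
    · intro m hm a
      induction a using kG_ind with
      | h2 x y hx hy => rw [map_add, LinearMap.add_apply]; exact add_mem hx hy
      | h3 c x hx => rw [map_smul, LinearMap.smul_apply]; exact Submodule.smul_mem _ _ hx
      | h1 g =>
        have : JJ ρ R lam α β (n+2) ≤
            (JJ ρ R lam α β (n+2)).comap (gM ρ lam (MonoidAlgebra.of k G g)) := by
          refine JJ_le ρ R lam α β (fun r m hm => ?_) (fun v m hm => ?_)
          · rw [Submodule.mem_comap, ← Module.End.mul_apply, hA.gq R hR α β hc]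
            exact q_JJ ρ R lam α β _ (gM_FF ρ lam _ hm)
          · rw [Submodule.mem_comap, ← Module.End.mul_apply, gM_vM]
            exact add_mem (vM_JJ ρ R lam α β _ (ih _ hm _)) (JJ_succ ρ R lam α β _ (ih _ hm _))
        exact this hm

lemma gam_JJ (hc : Cond ρ R hR lam α β) (r : R) (hm : m ∈ JJ ρ R lam α β n) :
    gam (gM ρ lam) (vM k G V) R α β r m ∈ JJ ρ R lam α β (n+1) :=
  gam_st ρ R lam α β (JJ_succ ρ R lam α β n) (fun a _ h => gM_JJ hc a h)
    (fun v _ h => vM_JJ ρ R lam α β v h) r hm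

end PartFour

section TensorLemmas

variable {k X Y : Type} [Field k] [AddCommGroup X] [Module k X] [AddCommGroup Y] [Module k Y]

lemma range_inf [FiniteDimensional k X] (A B : Submodule k Y) (w : X ⊗[k] Y)
    (hA : w ∈ LinearMap.range (TensorProduct.map (LinearMap.id (M := X) (R := k)) A.subtype))
    (hB : w ∈ LinearMap.range (TensorProduct.map (LinearMap.id (M := X) (R := k)) B.subtype)) :
    w ∈ LinearMap.range (TensorProduct.map (LinearMap.id (M := X) (R := k)) (A ⊓ B).subtype) := by
  let b := Module.finBasis k X
  let sl := fun c => (TensorProduct.lid k Y).toLinearMap.comp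
    (TensorProduct.map (b.coord c) (LinearMap.id (M := Y)))
  have hsl : ∀ c x y, sl c (x ⊗ₜ y) = b.coord c x • y := fun c x y => by simp [sl]
  have mem : ∀ (A : Submodule k Y), ∀ w ∈ LinearMap.range
      (TensorProduct.map (LinearMap.id (M := X) (R := k)) A.subtype), ∀ c, sl c w ∈ A := by
    rintro A _ ⟨t, rfl⟩ c
    induction t using TensorProduct.induction_on with
    | zero => simp
    | add x y hx hy => rw [map_add, map_add]; exact add_mem hx hy
    | tmul x y =>
      rw [TensorProduct.map_tmul, hsl]
      exact A.smul_mem _ y.2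
  have e : ∀ w : X ⊗[k] Y, w = ∑ c, b c ⊗ₜ sl c w := by
    intro w
    induction w using TensorProduct.induction_on with
    | zero => simp
    | add x y hx hy =>
      simp only [map_add, tmul_add, Finset.sum_add_distrib]; rw [← hx, ← hy]
    | tmul x y =>
      simp only [hsl, tmul_smul, ← TensorProduct.smul_tmul']
      simp only [TensorProduct.smul_tmul', ← TensorProduct.sum_tmul, Module.Basis.coord_apply, b.sum_repr]
  rw [e w]
  refine Submodule.sum_mem _ fun c _ => ?_
  exact ⟨b c ⊗ₜ ⟨sl c w, mem A w hA c, mem B w hB c⟩, by simp⟩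

lemma exists_proj (B : Submodule k Y) : ∃ p : Y →ₗ[k] B, ∀ y : B, p y = y := by
  obtain ⟨p, hp⟩ := LinearMap.exists_extend (LinearMap.id : B →ₗ[k] B)
  exact ⟨p, fun y => LinearMap.congr_fun hp y⟩

end TensorLemmas

section PartFive

variable {k G V : Type} [Field k] [Group G] [AddCommGroup V] [Module k V]
variable (R : Submodule k (V ⊗[k] V))

variable (k G V) in
def ES2 (n : ℕ) : (V ⊗[k] V) ⊗[k] (EE k G V n) ≃ₗ[k] EE k G V (n+2) :=
  (TensorProduct.assoc k V V (EE k G V n)).trans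
    ((TensorProduct.congr (LinearEquiv.refl k V) (ES k G V n)).trans (ES k G V (n+1)))

@[simp] lemma ES2_tmul (n : ℕ) (v w : V) (u : EE k G V n) :
    ES2 k G V n ((v ⊗ₜ w) ⊗ₜ u) = ES k G V (n+1) (v ⊗ₜ ES k G V n (w ⊗ₜ u)) := by
  simp [ES2]

variable (G) in
def WE : (n : ℕ) → ℕ → Submodule k (EE k G V n)
  | 0, _ => ⊥
  | 1, 0 => ⊥
  | n+2, 0 => (LinearMap.range (TensorProduct.map R.subtype
      (LinearMap.id (M := EE k G V n) (R := k)))).map (ES2 k G V n).toLinearMap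
  | n+1, i+1 => (LinearMap.range (TensorProduct.map (LinearMap.id (M := V) (R := k))
      (WE n i).subtype)).map (ES k G V n).toLinearMap

lemma WE_00 (i : ℕ) : WE G R 0 i = ⊥ := by cases i <;> simp [WE]

lemma WE_s0 (n : ℕ) : WE G R (n+2) 0 = (LinearMap.range (TensorProduct.map R.subtype
      (LinearMap.id (M := EE k G V n) (R := k)))).map (ES2 k G V n).toLinearMap := by
  simp [WE]

lemma WE_ss (n i : ℕ) : WE G R (n+1) (i+1) =
    (LinearMap.range (TensorProduct.map (LinearMap.id (M := V) (R := k))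
      (WE G R n i).subtype)).map (ES k G V n).toLinearMap := by
  simp [WE]

lemma WE_s0_le {n : ℕ} {S : Submodule k (EE k G V (n+2))}
    (h : ∀ r : R, ∀ u, ES2 k G V n ((r : V ⊗[k] V) ⊗ₜ u) ∈ S) : WE G R (n+2) 0 ≤ S := by
  rw [WE_s0, Submodule.map_le_iff_le_comap]
  rintro _ ⟨t, rfl⟩
  induction t using TensorProduct.induction_on with
  | zero => simp
  | add x y hx hy => rw [map_add]; exact add_mem hx hy
  | tmul x y => exact h x y

lemma WE_ss_le' {n : ℕ} {S : Submodule k (EE k G V (n+1))} (W : Submodule k (EE k G V n))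
    (h : ∀ v : V, ∀ u ∈ W, ES k G V n (v ⊗ₜ u) ∈ S) :
    (LinearMap.range (TensorProduct.map (LinearMap.id (M := V) (R := k))
      W.subtype)).map (ES k G V n).toLinearMap ≤ S := by
  rw [Submodule.map_le_iff_le_comap]
  rintro _ ⟨t, rfl⟩
  induction t using TensorProduct.induction_on with
  | zero => simp
  | add x y hx hy => rw [map_add]; exact add_mem hx hy
  | tmul x y => exact h x y y.2

lemma WE_ss_le {n i : ℕ} {S : Submodule k (EE k G V (n+1))}
    (h : ∀ v : V, ∀ u ∈ WE G R n i, ES k G V n (v ⊗ₜ u) ∈ S) : WE G R (n+1) (i+1) ≤ S := by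
  rw [WE_ss]
  exact WE_ss_le' _ h

lemma WE_ss_inf [FiniteDimensional k V] {n i j : ℕ} {S : Submodule k (EE k G V (n+1))}
    (h : ∀ v : V, ∀ u, u ∈ WE G R n i → u ∈ WE G R n j → ES k G V n (v ⊗ₜ u) ∈ S)
    {w : EE k G V (n+1)} (hi : w ∈ WE G R (n+1) (i+1)) (hj : w ∈ WE G R (n+1) (j+1)) :
    w ∈ S := by
  rw [WE_ss] at hi hj
  obtain ⟨t, ht, rfl⟩ := hi
  obtain ⟨t', ht', e⟩ := hj
  obtain rfl : t' = t := (ES k G V n).injective e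
  refine WE_ss_le' (WE G R n i ⊓ WE G R n j) (fun v u hu => h v u hu.1 hu.2) ?_
  exact ⟨t', range_inf _ _ _ ht ht', rfl⟩

lemma WE_far {n j : ℕ} {S : Submodule k (EE k G V (n+2))}
    (h : ∀ r : R, ∀ u ∈ WE G R n j, ES2 k G V n ((r : V ⊗[k] V) ⊗ₜ u) ∈ S)
    {w : EE k G V (n+2)} (hi : w ∈ WE G R (n+2) 0) (hj : w ∈ WE G R (n+2) (j+2)) :
    w ∈ S := by
  obtain ⟨p, hp⟩ := exists_proj (WE G R n j)
  let P : EE k G V n →ₗ[k] EE k G V n := (WE G R n j).subtype.comp p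
  let PP : EE k G V (n+2) →ₗ[k] EE k G V (n+2) :=
    (ES2 k G V n).toLinearMap.comp ((TensorProduct.map LinearMap.id P).comp
      (ES2 k G V n).symm.toLinearMap)
  have hPP : ∀ v w u, PP (ES k G V (n+1) (v ⊗ₜ ES k G V n (w ⊗ₜ u)))
      = ES k G V (n+1) (v ⊗ₜ ES k G V n (w ⊗ₜ P u)) := by
    intro v w u
    rw [← ES2_tmul, ← ES2_tmul]
    simp only [PP, LinearMap.comp_apply, LinearEquiv.coe_coe, LinearEquiv.symm_apply_apply, TensorProduct.map_tmul, LinearMap.id_apply]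
  have h1 : PP w = w := by
    have : WE G R (n+2) (j+2) ≤ LinearMap.ker (PP - LinearMap.id) := by
      refine WE_ss_le R fun v x hx => ?_
      have : WE G R (n+1) (j+1) ≤ (LinearMap.ker (PP - LinearMap.id)).comap
          ((ES k G V (n+1)).toLinearMap.comp (TensorProduct.mk k V _ v)) := by
        refine WE_ss_le R fun v' x' hx' => ?_
        simp only [Submodule.mem_comap, LinearMap.comp_apply, TensorProduct.mk_apply,
          LinearEquiv.coe_coe, LinearMap.mem_ker, LinearMap.sub_apply, hPP, LinearMap.id_apply]
        have : P x' = x' := congrArg Subtype.val (hp ⟨x', hx'⟩)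
        rw [this, sub_self]
      exact this hx
    have := this hj
    rwa [LinearMap.mem_ker, LinearMap.sub_apply, sub_eq_zero] at this
  rw [← h1]
  have : WE G R (n+2) 0 ≤ S.comap PP := by
    refine WE_s0_le R fun r u => ?_
    have : PP (ES2 k G V n ((r : V ⊗[k] V) ⊗ₜ u)) = ES2 k G V n ((r : V ⊗[k] V) ⊗ₜ P u) := by
      simp [PP]
    rw [Submodule.mem_comap, this]
    exact h r _ (p u).2
  exact this hi

variable (k G V) in
/-- `t ⊗ u` for `t ∈ V ⊗ (V ⊗ V)`. -/
def ins (n : ℕ) (u : EE k G V n) : V ⊗[k] (V ⊗[k] V) →ₗ[k] EE k G V (n+3) :=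
  (ES k G V (n+2)).toLinearMap.comp (TensorProduct.map LinearMap.id
    ((ES2 k G V n).toLinearMap.comp ((TensorProduct.mk k (V ⊗[k] V) (EE k G V n)).flip u)))

lemma ins_tmul (n : ℕ) (u : EE k G V n) (v : V) (t : V ⊗[k] V) :
    ins k G V n u (v ⊗ₜ t) = ES k G V (n+2) (v ⊗ₜ ES2 k G V n (t ⊗ₜ u)) := by
  simp [ins]

lemma WE_near [∀ n, FiniteDimensional k (EE k G V n)]
    {n : ℕ} {S : Submodule k (EE k G V (n+3))}
    (h : ∀ (x₁ : R ⊗[k] V) (x₂ : V ⊗[k] R), inclRV k V R x₁ = inclVR k V R x₂ →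
      ∀ u, ins k G V n u (inclRV k V R x₁) ∈ S)
    {w : EE k G V (n+3)} (hi : w ∈ WE G R (n+3) 0) (hj : w ∈ WE G R (n+3) 1) :
    w ∈ S := by
  let b := Module.finBasis k (EE k G V n)
  let sl := fun c => (TensorProduct.map (LinearMap.id (M := V) (R := k))
    ((TensorProduct.rid k (V ⊗[k] V)).toLinearMap.comp ((TensorProduct.map
      (LinearMap.id (M := V ⊗[k] V)) (b.coord c)).comp (ES2 k G V n).symm.toLinearMap))).comp
    (ES k G V (n+2)).symm.toLinearMap
  have hsl : ∀ c v t u, sl c (ES k G V (n+2) (v ⊗ₜ ES2 k G V n (t ⊗ₜ u)))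
      = b.coord c u • (v ⊗ₜ t) := fun c v t u => by simp [sl]
  have e : ∀ w : EE k G V (n+3), w = ∑ c, ins k G V n (b c) (sl c w) := by
    intro w
    induction w using E_ind with
    | hz => simp
    | ha x y hx hy =>
      simp only [map_add, Finset.sum_add_distrib]; rw [← hx, ← hy]
    | ht v w =>
      obtain ⟨w, rfl⟩ := (ES2 k G V n).surjective w
      induction w using TensorProduct.induction_on with
      | zero => simp
      | add x y hx hy =>
        simp only [map_add, tmul_add, Finset.sum_add_distrib]; rw [← hx, ← hy]
      | tmul t u =>
        simp only [hsl, map_smul, ins_tmul, Module.Basis.coord_apply]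
        simp only [← map_smul, ← tmul_smul, ← map_sum, ← tmul_sum, b.sum_repr]
  have m1 : ∀ c, sl c w ∈ LinearMap.range (inclRV k V R) := by
    intro c
    have : WE G R (n+3) 0 ≤ (LinearMap.range (inclRV k V R)).comap (sl c) := by
      refine WE_s0_le R fun r u => ?_
      induction u using E_ind with
      | hz => simp
      | ha x y hx hy => rw [tmul_add, map_add]; exact add_mem hx hy
      | ht v u =>
        have : ∀ t : V ⊗[k] V, sl c (ES2 k G V (n+1) (t ⊗ₜ ES k G V n (v ⊗ₜ u)))
            = b.coord c u • (TensorProduct.assoc k V V V (t ⊗ₜ v)) := by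
          intro t
          induction t using TensorProduct.induction_on with
          | zero => simp
          | add x y hx hy => simp only [map_add, add_tmul, hx, hy, smul_add]
          | tmul a a' => rw [ES2_tmul, ← ES2_tmul n a' v u, hsl]; simp
        rw [Submodule.mem_comap, this]
        exact Submodule.smul_mem _ _ ⟨r ⊗ₜ v, by simp [inclRV]⟩
    exact this hi
  have m2 : ∀ c, sl c w ∈ LinearMap.range (inclVR k V R) := by
    intro c
    have : WE G R (n+3) 1 ≤ (LinearMap.range (inclVR k V R)).comap (sl c) := by
      refine WE_ss_le R fun v x hx => ?_
      have : WE G R (n+2) 0 ≤ ((LinearMap.range (inclVR k V R)).comap (sl c)).comap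
          ((ES k G V (n+2)).toLinearMap.comp (TensorProduct.mk k V _ v)) := by
        refine WE_s0_le R fun r u => ?_
        simp only [Submodule.mem_comap, LinearMap.comp_apply, TensorProduct.mk_apply,
          LinearEquiv.coe_coe, hsl]
        exact Submodule.smul_mem _ _ ⟨v ⊗ₜ r, by simp [inclVR]⟩
      exact this hx
    exact this hj
  rw [e w]
  refine Submodule.sum_mem _ fun c _ => ?_
  obtain ⟨x₁, h1⟩ := m1 c
  obtain ⟨x₂, h2⟩ := m2 c
  rw [← h1]
  exact h x₁ x₂ (h1.trans h2.symm) _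

end PartFive

section PartSix

variable {k G V : Type} [Field k] [Group G] [AddCommGroup V] [Module k V]

instance EE_fin [Fintype G] [FiniteDimensional k V] (n : ℕ) : FiniteDimensional k (EE k G V n) := by
  induction n with
  | zero =>
    have : FiniteDimensional k (MonoidAlgebra k G) :=
      Module.Finite.equiv (MonoidAlgebra.coeffLinearEquiv k : MonoidAlgebra k G ≃ₗ[k] (G →₀ k)).symm
    exact Module.Finite.equiv (E0 k G V)
  | succ n ih => exact Module.Finite.equiv (ES k G V n)

variable (ρ : Representation k G V) (R : Submodule k (V ⊗[k] V))
variable (lam : MonoidAlgebra k G ⊗[k] V →ₗ[k] MonoidAlgebra k G)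
    (α : R →ₗ[k] (V ⊗[k] MonoidAlgebra k G))
    (β : R →ₗ[k] MonoidAlgebra k G)

def qT : V ⊗[k] V →ₗ[k] Module.End k (MM k G V) :=
  Classical.choose (LinearMap.exists_extend (qM ρ R lam α β))

lemma qT_apply (r : R) : qT ρ R lam α β (r : V ⊗[k] V) = qM ρ R lam α β r :=
  LinearMap.congr_fun (Classical.choose_spec (LinearMap.exists_extend (qM ρ R lam α β))) r

def phi : ℕ → (n : ℕ) → EE k G V n →ₗ[k] MM k G V
  | 0, 0 => 0
  | 0, 1 => 0
  | 0, n+2 => (TensorProduct.lift ((LinearMap.lcomp k (MM k G V) (lo k G V n)).comp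
      (qT ρ R lam α β))).comp (ES2 k G V n).symm.toLinearMap
  | _+1, 0 => 0
  | i+1, n+1 => (TensorProduct.lift ((LinearMap.lcomp k (MM k G V) (phi i n)).comp
      (vM k G V))).comp (ES k G V n).symm.toLinearMap

lemma phi_0 (n : ℕ) (r : R) (u : EE k G V n) :
    phi ρ R lam α β 0 (n+2) (ES2 k G V n ((r : V ⊗[k] V) ⊗ₜ u)) = qM ρ R lam α β r (lo k G V n u) := by
  rw [phi, LinearMap.comp_apply, LinearEquiv.coe_coe, LinearEquiv.symm_apply_apply,
    TensorProduct.lift.tmul, LinearMap.comp_apply, qT_apply]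
  rfl

lemma phi_s (i n : ℕ) (v : V) (u : EE k G V n) :
    phi ρ R lam α β (i+1) (n+1) (ES k G V n (v ⊗ₜ u)) = vM k G V v (phi ρ R lam α β i n u) := by
  rw [phi, LinearMap.comp_apply, LinearEquiv.coe_coe, LinearEquiv.symm_apply_apply,
    TensorProduct.lift.tmul, LinearMap.comp_apply]
  rfl

lemma phi_ss (i n : ℕ) (t : V ⊗[k] V) (u : EE k G V n) :
    phi ρ R lam α β (i+2) (n+2) (ES2 k G V n (t ⊗ₜ u))
      = mVV (vM k G V) t (phi ρ R lam α β i n u) := by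
  induction t using TensorProduct.induction_on with
  | zero => simp
  | add x y hx hy => rw [add_tmul, map_add, map_add, hx, hy, map_add, LinearMap.add_apply]
  | tmul v w => rw [ES2_tmul, phi_s, phi_s, mVV_tmul]; rfl

lemma mVV_lo (n : ℕ) (t : V ⊗[k] V) (u : EE k G V n) :
    mVV (vM k G V) t (lo k G V n u) = lo k G V (n+2) (ES2 k G V n (t ⊗ₜ u)) := by
  induction t using TensorProduct.induction_on with
  | zero => simp
  | add x y hx hy => rw [add_tmul, map_add, map_add, map_add, LinearMap.add_apply, hx, hy]
  | tmul v w => rw [ES2_tmul, mVV_tmul, Module.End.mul_apply, vM_lo, vM_lo]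

lemma WE_10 : WE (k := k) G R 1 0 = ⊥ := by simp [WE]

lemma phi_JJ (i n : ℕ) {w : EE k G V n} (hw : w ∈ WE G R n i) :
    phi ρ R lam α β i n w ∈ JJ ρ R lam α β n := by
  induction i generalizing n with
  | zero =>
    rcases n with _ | _ | n
    · rw [phi]; exact zero_mem _
    · rw [phi]; exact zero_mem _
    · have : WE G R (n+2) 0 ≤ (JJ ρ R lam α β (n+2)).comap (phi ρ R lam α β 0 (n+2)) := by
        refine WE_s0_le R fun r u => ?_
        rw [Submodule.mem_comap, phi_0]
        exact q_JJ ρ R lam α β r (lo_mem n u)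
      exact this hw
  | succ i ih =>
    rcases n with _ | n
    · rw [phi]; exact zero_mem _
    · have : WE G R (n+1) (i+1) ≤ (JJ ρ R lam α β (n+1)).comap (phi ρ R lam α β (i+1) (n+1)) := by
        refine WE_ss_le R fun v u hu => ?_
        rw [Submodule.mem_comap, phi_s]
        exact vM_JJ ρ R lam α β v (ih n hu)
      exact this hw

lemma phi_FF (i n : ℕ) {w : EE k G V (n+1)} (hw : w ∈ WE G R (n+1) i) :
    lo k G V (n+1) w - phi ρ R lam α β i (n+1) w ∈ FF k G V n := by
  induction i generalizing n with
  | zero =>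
    rcases n with _ | n
    · rw [WE_10] at hw
      obtain rfl : w = 0 := hw
      simp
    · have : WE G R (n+2) 0 ≤ (FF k G V (n+1)).comap
          (lo k G V (n+2) - phi ρ R lam α β 0 (n+2)) := by
        refine WE_s0_le R fun r u => ?_
        rw [Submodule.mem_comap, LinearMap.sub_apply, phi_0, qR_apply, LinearMap.sub_apply, mVV_lo,
          sub_sub_cancel]
        exact gam_FF ρ R lam α β r (lo_mem n u)
      exact this hw
  | succ i ih =>
    rcases n with _ | n
    · have : WE (k := k) G R 1 (i+1) ≤ ⊥ := by
        refine WE_ss_le R fun v u hu => ?_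
        rw [WE_00] at hu
        obtain rfl : u = 0 := hu
        simp
      obtain rfl : w = 0 := this hw
      simp
    · have : WE G R (n+2) (i+1) ≤ (FF k G V (n+1)).comap
          (lo k G V (n+2) - phi ρ R lam α β (i+1) (n+2)) := by
        refine WE_ss_le R fun v u hu => ?_
        rw [Submodule.mem_comap, LinearMap.sub_apply, phi_s, ← vM_lo, ← map_sub]
        exact vM_FF v (ih n hu)
      exact this hw

lemma phi_ins0 (n : ℕ) (u : EE k G V n) (x₁ : R ⊗[k] V) :
    phi ρ R lam α β 0 (n+3) (ins k G V n u (inclRV k V R x₁))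
      = LinearMap.mul' k _ (TensorProduct.map (qM ρ R lam α β) (vM k G V) x₁) (lo k G V n u) := by
  induction x₁ using TensorProduct.induction_on with
  | zero => simp
  | add x y hx hy => simp only [map_add, hx, hy, LinearMap.add_apply]
  | tmul r v =>
    rw [TensorProduct.map_tmul, LinearMap.mul'_apply, Module.End.mul_apply, vM_lo, ← phi_0]
    congr 1
    have : ∀ t : V ⊗[k] V, ins k G V n u (TensorProduct.assoc k V V V (t ⊗ₜ v)) =
        ES2 k G V (n+1) (t ⊗ₜ ES k G V n (v ⊗ₜ u)) := by
      intro t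
      induction t using TensorProduct.induction_on with
      | zero => simp
      | add x y hx hy => simp only [map_add, add_tmul, hx, hy]
      | tmul a a' => rw [TensorProduct.assoc_tmul, ins_tmul, ES2_tmul, ES2_tmul]
    exact this r

lemma phi_ins1 (n : ℕ) (u : EE k G V n) (x₂ : V ⊗[k] R) :
    phi ρ R lam α β 1 (n+3) (ins k G V n u (inclVR k V R x₂))
      = LinearMap.mul' k _ (TensorProduct.map (vM k G V) (qM ρ R lam α β) x₂) (lo k G V n u) := by
  induction x₂ using TensorProduct.induction_on with
  | zero => simp
  | add x y hx hy => simp only [map_add, hx, hy, LinearMap.add_apply]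
  | tmul v r =>
    rw [TensorProduct.map_tmul, LinearMap.mul'_apply, Module.End.mul_apply, ← phi_0, ← phi_s,
      ← ins_tmul]
    rfl

variable {ρ R lam α β}
variable {hR : ∀ (g : G) (x : V ⊗[k] V), x ∈ R → TensorProduct.map (ρ g) (ρ g) x ∈ R}

lemma phi_agree [Fintype G] [FiniteDimensional k V] (hc : Cond ρ R hR lam α β) (i j n : ℕ)
    (hij : i < j) {w : EE k G V (n+1)}
    (hi : w ∈ WE G R (n+1) i) (hj : w ∈ WE G R (n+1) j) :
    phi ρ R lam α β i (n+1) w - phi ρ R lam α β j (n+1) w ∈ JJ ρ R lam α β n := by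
  have hA := actRel_M hc.c1
  induction i generalizing n j with
  | zero =>
    rcases n with _ | n
    · rw [WE_10] at hi
      obtain rfl : w = 0 := hi
      simp
    · rcases j with _ | _ | j
      · omega
      · rcases n with _ | n
        · have : WE (k := k) G R 2 1 ≤ ⊥ := by
            refine WE_ss_le R fun v u hu => ?_
            rw [WE_10] at hu
            obtain rfl : u = 0 := hu
            simp
          obtain rfl : w = 0 := this hj
          simp
        · have := WE_near R (S := (JJ ρ R lam α β (n+2)).comap
            (phi ρ R lam α β 0 (n+3) - phi ρ R lam α β 1 (n+3))) (n := n) ?_ hi hj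
          · exact this
          · intro x₁ x₂ hx u
            rw [Submodule.mem_comap, LinearMap.sub_apply, phi_ins0, hx, phi_ins1]
            obtain ⟨y, hy⟩ := hA.overlap R hR α β hc x₁ x₂ hx
            rw [← LinearMap.sub_apply, hy, LinearMap.neg_apply]
            refine neg_mem ?_
            clear hy
            induction y using TensorProduct.induction_on with
            | zero => simp
            | add x y hx hy => simp only [map_add, LinearMap.add_apply]; exact add_mem hx hy
            | tmul r a =>
              rw [TensorProduct.map_tmul, LinearMap.mul'_apply, Module.End.mul_apply]
              exact q_JJ ρ R lam α β r (gM_FF ρ lam a (lo_mem n u))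
      · have := WE_far R (S := (JJ ρ R lam α β (n+1)).comap
            (phi ρ R lam α β 0 (n+2) - phi ρ R lam α β (j+2) (n+2))) (n := n) ?_ hi hj
        · exact this
        · intro r u hu
          rw [Submodule.mem_comap, LinearMap.sub_apply, phi_0, phi_ss]
          rcases n with _ | n
          · rw [WE_00] at hu
            obtain rfl : u = 0 := hu
            simp
          · have e : qM ρ R lam α β r (lo k G V (n+1) u)
                - mVV (vM k G V) (r : V ⊗[k] V) (phi ρ R lam α β j (n+1) u)
                = qM ρ R lam α β r (lo k G V (n+1) u - phi ρ R lam α β j (n+1) u)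
                  - gam (gM ρ lam) (vM k G V) R α β r (phi ρ R lam α β j (n+1) u) := by
              rw [map_sub, qR_apply]
              simp only [LinearMap.sub_apply]
              abel
            rw [e]
            exact sub_mem (q_JJ ρ R lam α β r (phi_FF ρ R lam α β j n hu))
              (gam_JJ hc r (phi_JJ ρ R lam α β j (n+1) hu))
  | succ i ih =>
    rcases j with _ | j
    · omega
    have := WE_ss_inf R (S := (JJ ρ R lam α β n).comap
            (phi ρ R lam α β (i+1) (n+1) - phi ρ R lam α β (j+1) (n+1))) (n := n) ?_ hi hj
    · exact this
    · intro v u hu hu'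
      rw [Submodule.mem_comap, LinearMap.sub_apply, phi_s, phi_s, ← map_sub]
      rcases n with _ | n
      · rw [WE_00] at hu
        obtain rfl : u = 0 := hu
        simp
      · exact vM_JJ ρ R lam α β v (ih j n (by omega) hu hu')

end PartSix

section PartSeven

variable (k G V : Type) [Field k] [Group G] [AddCommGroup V] [Module k V]

def eqv : (m : ℕ) → (Vpow k V m) ⊗[k] MonoidAlgebra k G ≃ₗ[k] EE k G V (m+1)
  | 0 => (TensorProduct.congr (LinearEquiv.refl k V) (E0 k G V)).trans (ES k G V 0)
  | m+1 => (TensorProduct.assoc k V (Vpow k V m) (MonoidAlgebra k G)).trans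
      ((TensorProduct.congr (LinearEquiv.refl k V) (eqv m)).trans (ES k G V (m+1)))

lemma eqv_0 (v : V) (a : MonoidAlgebra k G) :
    eqv k G V 0 ((show Vpow k V 0 from v) ⊗ₜ a) = ES k G V 0 (v ⊗ₜ E0 k G V a) := by
  rfl

lemma eqv_s (m : ℕ) (v : V) (x : Vpow k V m) (a : MonoidAlgebra k G) :
    eqv k G V (m+1) ((show Vpow k V (m+1) from v ⊗ₜ[k] x) ⊗ₜ a)
      = ES k G V (m+1) (v ⊗ₜ eqv k G V m (x ⊗ₜ a)) := by
  rfl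

variable {k G V}
variable (R : Submodule k (V ⊗[k] V))

lemma Wsub_0 (i : ℕ) : Wsub k V R 0 i = ⊥ := rfl

lemma Wsub_10 : Wsub k V R 1 0 = R := rfl

lemma Wsub_s0 (m : ℕ) : Wsub k V R (m+2) 0 =
    Submodule.map (TensorProduct.assoc k V V (Vpow k V m)).toLinearMap
        (LinearMap.range (TensorProduct.map R.subtype (LinearMap.id (M := Vpow k V m)))) := rfl

lemma Wsub_ss (m i : ℕ) : Wsub k V R (m+1) (i+1) =
    LinearMap.range (TensorProduct.map (LinearMap.id (M := V)) (Wsub k V R m i).subtype) := by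
  rcases m with _ | m
  · change (⊥ : Submodule k (V ⊗[k] Vpow k V 0)) = _
    symm
    rw [LinearMap.range_eq_bot, Wsub_0]
    refine TensorProduct.ext' fun v x => ?_
    have : (⊥ : Submodule k (Vpow k V 0)).subtype x = 0 := x.2
    rw [TensorProduct.map_tmul, this, tmul_zero]; rfl
  · rfl

lemma WE_eqv (m i : ℕ) : WE G R (m+1) i ≤ Submodule.span k
    {w | ∃ x ∈ Wsub k V R m i, ∃ a, w = eqv k G V m (x ⊗ₜ a)} := by
  induction m generalizing i with
  | zero =>
    rcases i with _ | i
    · rw [WE_10]; exact bot_le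
    · refine WE_ss_le R fun v u hu => ?_
      rw [WE_00] at hu
      obtain rfl : u = 0 := hu
      simp
  | succ m ih =>
    rcases i with _ | i
    · refine WE_s0_le R fun r u => ?_
      rcases m with _ | m
      · obtain ⟨a, rfl⟩ := (E0 k G V).surjective u
        refine Submodule.subset_span ⟨(r : V ⊗[k] V), ?_, a, ?_⟩
        · change _ ∈ R; exact r.2
        · have : ∀ t : V ⊗[k] V, ES2 k G V 0 (t ⊗ₜ E0 k G V a) =
              eqv k G V 1 ((show Vpow k V 1 from t) ⊗ₜ a) := by
            intro t
            induction t using TensorProduct.induction_on with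
            | zero => rw [zero_tmul, map_zero]; symm; exact (congrArg _ (zero_tmul _ a)).trans (map_zero _)
            | add x y hx hy =>
              rw [add_tmul, map_add, hx, hy]; symm
              exact (congrArg _ (add_tmul _ _ a)).trans (map_add _ _ _)
            | tmul v w => rw [ES2_tmul]; rfl
          exact this r
      · obtain ⟨u, rfl⟩ := (eqv k G V m).surjective u
        induction u using TensorProduct.induction_on with
        | zero => simp
        | add x y hx hy => rw [map_add, tmul_add, map_add]; exact add_mem hx hy
        | tmul x a =>
          refine Submodule.subset_span ⟨(TensorProduct.assoc k V V (Vpow k V m)) ((r : V ⊗[k] V) ⊗ₜ x), ?_, a, ?_⟩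
          · rw [Wsub_s0]
            exact ⟨_, ⟨r ⊗ₜ x, rfl⟩, rfl⟩
          · have : ∀ t : V ⊗[k] V, ES2 k G V (m+1) (t ⊗ₜ eqv k G V m (x ⊗ₜ a)) =
              eqv k G V (m+2) ((show Vpow k V (m+2) from
                (TensorProduct.assoc k V V (Vpow k V m)) (t ⊗ₜ x)) ⊗ₜ a) := by
              intro t
              induction t using TensorProduct.induction_on with
              | zero =>
                rw [zero_tmul, map_zero, zero_tmul, map_zero]; symm
                exact (congrArg _ (zero_tmul _ a)).trans (map_zero _)
              | add y z hy hz =>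
                rw [add_tmul, map_add, hy, hz, add_tmul, map_add]; symm
                exact (congrArg _ (add_tmul _ _ a)).trans (map_add _ _ _)
              | tmul v w => rw [ES2_tmul]; rfl
            exact this r
    · refine WE_ss_le R fun v u hu => ?_
      have : WE G R (m+1) i ≤ (Submodule.span k
        {w | ∃ x ∈ Wsub k V R (m+1) (i+1), ∃ a, w = eqv k G V (m+1) (x ⊗ₜ a)}).comap
          ((ES k G V (m+1)).toLinearMap.comp (TensorProduct.mk k V _ v)) := by
        refine (ih i).trans (Submodule.span_le.2 ?_)
        rintro _ ⟨x, hx, a, rfl⟩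
        refine Submodule.subset_span ⟨v ⊗ₜ[k] x, ?_, a, ?_⟩
        · rw [Wsub_ss]
          exact ⟨v ⊗ₜ ⟨x, hx⟩, rfl⟩
        · rfl
      exact this hu

lemma eqv_WE (m i : ℕ) {x : Vpow k V m} (hx : x ∈ Wsub k V R m i) (a : MonoidAlgebra k G) :
    eqv k G V m (x ⊗ₜ a) ∈ WE G R (m+1) i := by
  induction m generalizing i with
  | zero =>
    have : x = 0 := hx
    subst this
    rw [zero_tmul, map_zero]; exact zero_mem _
  | succ m ih =>
    rcases i with _ | i
    · rw [WE_s0]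
      rcases m with _ | m
      · change x ∈ R at hx
        have : ∀ t : V ⊗[k] V, ES2 k G V 0 (t ⊗ₜ E0 k G V a) =
              eqv k G V 1 ((show Vpow k V 1 from t) ⊗ₜ a) := by
            intro t
            induction t using TensorProduct.induction_on with
            | zero => rw [zero_tmul, map_zero]; symm; exact (congrArg _ (zero_tmul _ a)).trans (map_zero _)
            | add x y hx hy =>
              rw [add_tmul, map_add, hx, hy]; symm
              exact (congrArg _ (add_tmul _ _ a)).trans (map_add _ _ _)
            | tmul v w => rw [ES2_tmul]; rfl
        exact ⟨_, ⟨(⟨x, hx⟩ : R) ⊗ₜ E0 k G V a, rfl⟩, this x⟩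
      · rw [Wsub_s0] at hx
        obtain ⟨_, ⟨t, rfl⟩, rfl⟩ := hx
        rw [← WE_s0]
        have : ∀ t : V ⊗[k] V, ∀ x : Vpow k V m, ES2 k G V (m+1) (t ⊗ₜ eqv k G V m (x ⊗ₜ a)) =
              eqv k G V (m+2) ((show Vpow k V (m+2) from
                (TensorProduct.assoc k V V (Vpow k V m)) (t ⊗ₜ x)) ⊗ₜ a) := by
              intro t x
              induction t using TensorProduct.induction_on with
              | zero =>
                rw [zero_tmul, map_zero, zero_tmul, map_zero]; symm
                exact (congrArg _ (zero_tmul _ a)).trans (map_zero _)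
              | add y z hy hz =>
                rw [add_tmul, map_add, hy, hz, add_tmul, map_add]; symm
                exact (congrArg _ (add_tmul _ _ a)).trans (map_add _ _ _)
              | tmul v w => rw [ES2_tmul]; rfl
        let L : (V ⊗[k] V) ⊗[k] (Vpow k V m) →ₗ[k] EE k G V (m+3) :=
          (eqv k G V (m+2)).toLinearMap.comp
            (((TensorProduct.mk k (Vpow k V (m+2)) (MonoidAlgebra k G)).flip a).comp
              (TensorProduct.assoc k V V (Vpow k V m)).toLinearMap)
        change L _ ∈ _
        induction t using TensorProduct.induction_on with
        | zero => rw [map_zero, map_zero]; exact zero_mem _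
        | add x y hx hy => rw [map_add, map_add]; exact add_mem hx hy
        | tmul r x =>
          rw [WE_s0]
          exact ⟨_, ⟨r ⊗ₜ eqv k G V m (x ⊗ₜ a), rfl⟩, this r x⟩
    · rw [Wsub_ss] at hx
      obtain ⟨t, rfl⟩ := hx
      rw [WE_ss]
      let L : V ⊗[k] (Vpow k V m) →ₗ[k] EE k G V (m+2) :=
          (eqv k G V (m+1)).toLinearMap.comp
            (((TensorProduct.mk k (Vpow k V (m+1)) (MonoidAlgebra k G)).flip a))
      change L _ ∈ _
      induction t using TensorProduct.induction_on with
      | zero => rw [map_zero, map_zero]; exact zero_mem _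
      | add x y hx hy => rw [map_add, map_add]; exact add_mem hx hy
      | tmul v x =>
        exact ⟨_, ⟨v ⊗ₜ ⟨_, ih i x.2⟩, rfl⟩, rfl⟩

lemma glue (hK : IsKoszul k V R) (n : ℕ) {Y : Type} [AddCommGroup Y] [Module k Y]
    (f : ℕ → EE k G V (n+1) →ₗ[k] Y)
    (hf : ∀ i j, i < j → ∀ w ∈ WE G R (n+1) i, w ∈ WE G R (n+1) j → f i w = f j w) :
    ∃ F : EE k G V (n+1) →ₗ[k] Y, ∀ i, ∀ w ∈ WE G R (n+1) i, F w = f i w := by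
  classical
  obtain ⟨ι, b, hb⟩ := hK n
  have hf' : ∀ i j, ∀ w ∈ WE G R (n+1) i, w ∈ WE G R (n+1) j → f i w = f j w := by
    intro i j w hi hj
    rcases lt_trichotomy i j with h | h | h
    · exact hf i j h w hi hj
    · rw [h]
    · exact (hf j i h w hj hi).symm
  let c : ι → (MonoidAlgebra k G →ₗ[k] Y) := fun s =>
    if h : ∃ i, b s ∈ Wsub k V R n i then
      (f h.choose).comp ((eqv k G V n).toLinearMap.comp (TensorProduct.mk k _ _ (b s))) else 0
  let F' : (Vpow k V n) ⊗[k] MonoidAlgebra k G →ₗ[k] Y := TensorProduct.lift (b.constr k c)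
  refine ⟨F'.comp (eqv k G V n).symm.toLinearMap, fun i w hw => ?_⟩
  have h1 := WE_eqv R n i hw
  have : Submodule.span k {w | ∃ x ∈ Wsub k V R n i, ∃ a, w = eqv k G V n (x ⊗ₜ a)} ≤
      LinearMap.ker (F'.comp (eqv k G V n).symm.toLinearMap - f i) := by
    refine Submodule.span_le.2 ?_
    rintro _ ⟨x, hx, a, rfl⟩
    obtain ⟨J, hJ⟩ := hb i
    rw [hJ] at hx
    rw [SetLike.mem_coe, LinearMap.mem_ker, LinearMap.sub_apply, sub_eq_zero]
    have : Submodule.span k (⇑b '' J) ≤ LinearMap.eqLocus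
      ((F'.comp (eqv k G V n).symm.toLinearMap).comp ((eqv k G V n).toLinearMap.comp
        ((TensorProduct.mk k _ _).flip a)))
      ((f i).comp ((eqv k G V n).toLinearMap.comp
        ((TensorProduct.mk k _ _).flip a))) := by
      refine Submodule.span_le.2 ?_
      rintro _ ⟨s, hs, rfl⟩
      have hi : b s ∈ Wsub k V R n i := by rw [hJ]; exact Submodule.subset_span ⟨s, hs, rfl⟩
      have h : ∃ i, b s ∈ Wsub k V R n i := ⟨i, hi⟩
      simp only [SetLike.mem_coe, LinearMap.mem_eqLocus, LinearMap.comp_apply, LinearEquiv.coe_coe,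
        LinearMap.flip_apply, TensorProduct.mk_apply, LinearEquiv.symm_apply_apply, F',
        TensorProduct.lift.tmul, Module.Basis.constr_basis, c]
      rw [dif_pos h]
      exact hf' _ _ _ (eqv_WE R n _ h.choose_spec a) (eqv_WE R n _ hi a)
    exact this hx
  have := this h1
  rwa [LinearMap.mem_ker, LinearMap.sub_apply, sub_eq_zero] at this

end PartSeven

section PartEight

variable {k G V : Type} [Field k] [Group G] [AddCommGroup V] [Module k V]
variable (ρ : Representation k G V) (R : Submodule k (V ⊗[k] V))
variable (lam : MonoidAlgebra k G ⊗[k] V →ₗ[k] MonoidAlgebra k G)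
    (α : R →ₗ[k] (V ⊗[k] MonoidAlgebra k G))
    (β : R →ₗ[k] MonoidAlgebra k G)

lemma JJ_gen (n : ℕ) : JJ ρ R lam α β (n+1) ≤ JJ ρ R lam α β n ⊔
    ⨆ i, (WE G R (n+1) i).map (phi ρ R lam α β i (n+1)) := by
  induction n with
  | zero => exact bot_le
  | succ n ih =>
    refine JJ_le ρ R lam α β ?_ ?_
    · intro r m hm
      have h0 : ∀ u, qM ρ R lam α β r (lo k G V n u) ∈ JJ ρ R lam α β (n+1) ⊔
          ⨆ i, (WE G R (n+2) i).map (phi ρ R lam α β i (n+2)) := by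
        intro u
        refine Submodule.mem_sup_right (Submodule.mem_iSup_of_mem 0 ?_)
        rw [← phi_0]
        refine Submodule.mem_map_of_mem ?_
        rw [WE_s0]
        exact ⟨_, ⟨r ⊗ₜ u, rfl⟩, rfl⟩
      rcases n with _ | n
      · obtain ⟨u, rfl⟩ := FF_zero hm
        exact h0 u
      · obtain ⟨m', hm', u, rfl⟩ := FF_succ hm
        rw [map_add]
        exact add_mem (Submodule.mem_sup_left (q_JJ ρ R lam α β r hm')) (h0 u)
    · intro v m hm
      have : JJ ρ R lam α β n ⊔ (⨆ i, (WE G R (n+1) i).map (phi ρ R lam α β i (n+1))) ≤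
          (JJ ρ R lam α β (n+1) ⊔
          ⨆ i, (WE G R (n+2) i).map (phi ρ R lam α β i (n+2))).comap (vM k G V v) := by
        refine sup_le ?_ (iSup_le fun i => ?_)
        · intro m hm
          exact Submodule.mem_sup_left (vM_JJ ρ R lam α β v hm)
        · rintro _ ⟨w, hw, rfl⟩
          refine Submodule.mem_sup_right (Submodule.mem_iSup_of_mem (i+1) ?_)
          rw [← phi_s]
          refine Submodule.mem_map_of_mem ?_
          rw [WE_ss]
          exact ⟨_, ⟨v ⊗ₜ ⟨w, hw⟩, rfl⟩, rfl⟩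
      exact this (ih hm)

lemma cpt_phi (n i : ℕ) {w : EE k G V (n+1)} (hw : w ∈ WE G R (n+1) i) :
    cpt k G V (n+1) (phi ρ R lam α β i (n+1) w) = w := by
  have := cpt_FF (Nat.lt_succ_self n) (phi_FF ρ R lam α β i n hw)
  rw [map_sub, cpt_lo, sub_eq_zero] at this
  exact this.symm

lemma map_cpt_JJ (n : ℕ) : (JJ ρ R lam α β (n+1)).map (cpt k G V (n+1)) = ⨆ i, WE G R (n+1) i := by
  apply le_antisymm
  · rw [Submodule.map_le_iff_le_comap]
    refine (JJ_gen ρ R lam α β n).trans (sup_le ?_ (iSup_le fun i => ?_))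
    · intro m hm
      rw [Submodule.mem_comap, cpt_FF (Nat.lt_succ_self n) (JJ_le_FF ρ R lam α β n hm)]
      exact zero_mem _
    · rintro _ ⟨w, hw, rfl⟩
      rw [Submodule.mem_comap, cpt_phi ρ R lam α β n i hw]
      exact Submodule.mem_iSup_of_mem i hw
  · refine iSup_le fun i w hw => ?_
    exact ⟨_, phi_JJ ρ R lam α β i (n+1) hw, cpt_phi ρ R lam α β n i hw⟩

lemma FF_of_cpt {n : ℕ} {m : MM k G V} (hm : m ∈ FF k G V (n+1)) (h : cpt k G V (n+1) m = 0) :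
    m ∈ FF k G V n := by
  obtain ⟨m', hm', u, rfl⟩ := FF_succ hm
  rw [map_add, cpt_lo, cpt_FF (Nat.lt_succ_self n) hm', zero_add] at h
  rw [h, map_zero, add_zero]
  exact hm'

instance FF_fin [Fintype G] [FiniteDimensional k V] (n : ℕ) : FiniteDimensional k (FF k G V n) := by
  induction n with
  | zero =>
    have : FF k G V 0 ≤ LinearMap.range (lo k G V 0) := by
      intro m hm
      obtain ⟨u, rfl⟩ := FF_zero hm
      exact ⟨u, rfl⟩
    exact Submodule.finiteDimensional_of_le this
  | succ n ih =>
    have : FF k G V (n+1) ≤ FF k G V n ⊔ LinearMap.range (lo k G V (n+1)) := by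
      intro m hm
      obtain ⟨m', hm', u, rfl⟩ := FF_succ hm
      exact add_mem (Submodule.mem_sup_left hm') (Submodule.mem_sup_right ⟨u, rfl⟩)
    exact Submodule.finiteDimensional_of_le this

instance JJ_fin [Fintype G] [FiniteDimensional k V] (n : ℕ) :
    FiniteDimensional k (JJ ρ R lam α β n) :=
  Submodule.finiteDimensional_of_le (JJ_le_FF ρ R lam α β n)

variable {ρ R lam α β}
variable {hR : ∀ (g : G) (x : V ⊗[k] V), x ∈ R → TensorProduct.map (ρ g) (ρ g) x ∈ R}

lemma JJ_key [Fintype G] [FiniteDimensional k V] (hK : IsKoszul k V R)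
    (hc : Cond ρ R hR lam α β) (n : ℕ) {m : MM k G V}
    (hm : m ∈ JJ ρ R lam α β (n+1)) (hF : m ∈ FF k G V n) : m ∈ JJ ρ R lam α β n := by
  let mk := (JJ ρ R lam α β n).mkQ
  obtain ⟨F, hFF⟩ := glue R hK n (fun i => mk.comp (lo k G V (n+1) - phi ρ R lam α β i (n+1))) (by
    intro i j hij w hi hj
    rw [← sub_eq_zero, ← LinearMap.sub_apply, ← LinearMap.comp_sub, LinearMap.comp_apply,
      Submodule.mkQ_apply, Submodule.Quotient.mk_eq_zero, sub_sub_sub_cancel_left,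
      LinearMap.sub_apply, ← neg_mem_iff, neg_sub]
    exact phi_agree hc i j n hij hi hj)
  let Ψ : MM k G V →ₗ[k] (MM k G V ⧸ JJ ρ R lam α β n) :=
    mk.comp (LinearMap.id - (lo k G V (n+1)).comp (cpt k G V (n+1))) + F.comp (cpt k G V (n+1))
  have hΨ : ∀ m ∈ FF k G V n, Ψ m = mk m := by
    intro m hm
    simp [Ψ, cpt_FF (Nat.lt_succ_self n) hm]
  have hΨ' : ∀ u, Ψ (lo k G V (n+1) u) = F u := by
    intro u
    simp [Ψ]
  have h : JJ ρ R lam α β (n+1) ≤ LinearMap.ker Ψ := by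
    refine (JJ_gen ρ R lam α β n).trans (sup_le ?_ (iSup_le fun i => ?_))
    · intro m hm
      rw [LinearMap.mem_ker, hΨ _ (JJ_le_FF ρ R lam α β n hm)]
      exact (Submodule.Quotient.mk_eq_zero _).2 hm
    · rintro _ ⟨w, hw, rfl⟩
      have h1 := hΨ _ (phi_FF ρ R lam α β i n hw)
      rw [map_sub, hΨ', hFF i w hw, LinearMap.comp_apply, LinearMap.sub_apply, sub_eq_self] at h1
      exact h1
  have h0 := h hm
  rw [LinearMap.mem_ker, hΨ m hF] at h0
  exact (Submodule.Quotient.mk_eq_zero _).1 h0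

lemma JJ_inf [Fintype G] [FiniteDimensional k V] (hK : IsKoszul k V R)
    (hc : Cond ρ R hR lam α β) (N d : ℕ) {m : MM k G V}
    (hm : m ∈ JJ ρ R lam α β N) (hF : m ∈ FF k G V d) : m ∈ JJ ρ R lam α β d := by
  induction N with
  | zero => exact JJ_mono ρ R lam α β (Nat.zero_le d) hm
  | succ N ih =>
    rcases Nat.lt_or_ge N d with h | h
    · exact JJ_mono ρ R lam α β h hm
    · exact ih (JJ_key hK hc N hm (FF_mono h hF))

lemma JJ_finrank [Fintype G] [FiniteDimensional k V] (hK : IsKoszul k V R)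
    (hc : Cond ρ R hR lam α β) (n : ℕ) :
    Module.finrank k (JJ ρ R lam α β (n+1)) = Module.finrank k (JJ ρ R lam α β n) +
      Module.finrank k (⨆ i, WE G R (n+1) i : Submodule k (EE k G V (n+1))) := by
  let f := (cpt k G V (n+1)).domRestrict (JJ ρ R lam α β (n+1))
  have h := LinearMap.finrank_range_add_finrank_ker f
  have h1 : LinearMap.range f = ⨆ i, WE G R (n+1) i := by
    rw [← map_cpt_JJ ρ R lam α β n, LinearMap.range_domRestrict]
  have h2 : LinearMap.ker f = (JJ ρ R lam α β n).comap (JJ ρ R lam α β (n+1)).subtype := by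
    ext m
    rw [LinearMap.mem_ker, Submodule.mem_comap]
    constructor
    · intro hm
      exact JJ_key hK hc n m.2 (FF_of_cpt (JJ_le_FF ρ R lam α β _ m.2) hm)
    · intro hm
      exact cpt_FF (Nat.lt_succ_self n) (JJ_le_FF ρ R lam α β _ hm)
  rw [h1, h2] at h
  have h3 := (Submodule.comapSubtypeEquivOfLe (JJ_succ ρ R lam α β n)).finrank_eq
  omega

lemma JJ_finrank_eq [Fintype G] [FiniteDimensional k V] (hK : IsKoszul k V R)
    {lam' : MonoidAlgebra k G ⊗[k] V →ₗ[k] MonoidAlgebra k G}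
    {α' : R →ₗ[k] (V ⊗[k] MonoidAlgebra k G)} {β' : R →ₗ[k] MonoidAlgebra k G}
    (hc : Cond ρ R hR lam α β) (hc' : Cond ρ R hR lam' α' β') (n : ℕ) :
    Module.finrank k (JJ ρ R lam α β n) = Module.finrank k (JJ ρ R lam' α' β' n) := by
  induction n with
  | zero => rfl
  | succ n ih => rw [JJ_finrank hK hc, JJ_finrank hK hc', ih]

end PartEight

section PartNineA

variable {k G V : Type} [Field k] [Group G] [AddCommGroup V] [Module k V]
variable {ρ : Representation k G V} {R : Submodule k (V ⊗[k] V)}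
variable {lam : MonoidAlgebra k G ⊗[k] V →ₗ[k] MonoidAlgebra k G}
    {α : R →ₗ[k] (V ⊗[k] MonoidAlgebra k G)}
    {β : R →ₗ[k] MonoidAlgebra k G}
variable {A N : Type} [Ring A] [Algebra k A] [AddCommGroup N] [Module k N] [Module A N]
variable {gm : MonoidAlgebra k G →ₗ[k] A} {vm : V →ₗ[k] A} (f : MM k G V →ₗ[k] N)

lemma tw_VV (hv : ∀ v m, f (vM k G V v m) = vm v • f m) (t : V ⊗[k] V) (m : MM k G V) :
    f (mVV (vM k G V) t m) = mVV vm t • f m := by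
  induction t using TensorProduct.induction_on with
  | zero => simp
  | add x y hx hy => simp only [map_add, LinearMap.add_apply, hx, hy, add_smul]
  | tmul a b => simp only [mVV_tmul, Module.End.mul_apply, hv, mul_smul]

lemma tw_VG (hv : ∀ v m, f (vM k G V v m) = vm v • f m)
    (hg : ∀ a m, f (gM ρ lam a m) = gm a • f m) (t : V ⊗[k] MonoidAlgebra k G) (m : MM k G V) :
    f (mVG (gM ρ lam) (vM k G V) t m) = mVG gm vm t • f m := by
  induction t using TensorProduct.induction_on with
  | zero => simp
  | add x y hx hy => simp only [map_add, LinearMap.add_apply, hx, hy, add_smul]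
  | tmul a b => simp only [mVG_tmul, Module.End.mul_apply, hv, hg, mul_smul]

lemma tw_gam (hv : ∀ v m, f (vM k G V v m) = vm v • f m)
    (hg : ∀ a m, f (gM ρ lam a m) = gm a • f m) (r : R) (m : MM k G V) :
    f (gam (gM ρ lam) (vM k G V) R α β r m) = gam gm vm R α β r • f m := by
  simp only [gam_apply, LinearMap.add_apply, map_add, add_smul, hg, tw_VG f hv hg]

lemma tw_q (hv : ∀ v m, f (vM k G V v m) = vm v • f m)
    (hg : ∀ a m, f (gM ρ lam a m) = gm a • f m) (r : R) (m : MM k G V) :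
    f (qM ρ R lam α β r m) = qR gm vm R α β r • f m := by
  rw [qR_apply, qR_apply, LinearMap.sub_apply, map_sub, sub_smul, tw_VV f hv, tw_gam f hv hg]

end PartNineA

section PartNine

variable {k G V : Type} [Field k] [Group G] [AddCommGroup V] [Module k V]
variable (ρ : Representation k G V) (R : Submodule k (V ⊗[k] V))
variable (lam : MonoidAlgebra k G ⊗[k] V →ₗ[k] MonoidAlgebra k G)
    (α : R →ₗ[k] (V ⊗[k] MonoidAlgebra k G))
    (β : R →ₗ[k] MonoidAlgebra k G)

def gH : MonoidAlgebra k G →ₗ[k] HAlg k G V R ρ lam α β :=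
  (toH k G V R ρ lam α β).toLinearMap.comp (gIn k G V)

def vH : V →ₗ[k] HAlg k G V R ρ lam α β :=
  (toH k G V R ρ lam α β).toLinearMap.comp (vIn k G V)

lemma toH_g (a) : toH k G V R ρ lam α β (gIn k G V a) = gH ρ R lam α β a := rfl
lemma toH_v (a) : toH k G V R ρ lam α β (vIn k G V a) = vH ρ R lam α β a := rfl

lemma toH_rel {x y} (h : GRel k G V R ρ lam α β x y) :
    toH k G V R ρ lam α β x = toH k G V R ρ lam α β y := RingQuot.mkAlgHom_rel k h

lemma actRel_H : ActRel (gH ρ R lam α β) (vH ρ R lam α β) ρ lam where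
  one := by
    have := toH_rel ρ R lam α β GRel.unit
    exact this.trans (map_one _)
  mul x y := by
    have := toH_rel ρ R lam α β (GRel.gmul x y)
    rw [map_mul] at this
    exact this.symm
  act g v := by
    have := toH_rel ρ R lam α β (GRel.act g v)
    rw [map_mul, map_add, map_mul] at this
    exact this

lemma toH_VV (t : V ⊗[k] V) : toH k G V R ρ lam α β (mulVV k G V t) = mVV (vH ρ R lam α β) t := by
  induction t using TensorProduct.induction_on with
  | zero => simp
  | add x y hx hy => simp only [map_add, hx, hy]
  | tmul a b => simp [mulVV, toH_v]

lemma toH_VG (t : V ⊗[k] MonoidAlgebra k G) : toH k G V R ρ lam α β (embVG k G V t)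
    = mVG (gH ρ R lam α β) (vH ρ R lam α β) t := by
  induction t using TensorProduct.induction_on with
  | zero => simp
  | add x y hx hy => simp only [map_add, hx, hy]
  | tmul a b => simp [embVG, toH_v, toH_g]

lemma quad_H (r : R) : qR (gH ρ R lam α β) (vH ρ R lam α β) R α β r = 0 := by
  have := toH_rel ρ R lam α β (GRel.quad r)
  rw [toH_VV, map_add, toH_VG, toH_g] at this
  rw [qR_apply, this, gam_apply, sub_self]

def psiN : (n : ℕ) → EE k G V n →ₗ[k] HAlg k G V R ρ lam α β
  | 0 => (gH ρ R lam α β).comp (E0 k G V).symm.toLinearMap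
  | n+1 => ((LinearMap.mul' k _).comp (TensorProduct.map (vH ρ R lam α β) (psiN n))).comp
      (ES k G V n).symm.toLinearMap

def psi : MM k G V →ₗ[k] HAlg k G V R ρ lam α β :=
  DirectSum.toModule k ℕ _ (psiN ρ R lam α β)

lemma psi_lo (n u) : psi ρ R lam α β (lo k G V n u) = psiN ρ R lam α β n u := by
  simp [psi, lo, DirectSum.toModule_lof]

lemma psi_lo0 (a) : psi ρ R lam α β (lo k G V 0 (E0 k G V a)) = gH ρ R lam α β a := by
  rw [psi_lo]; simp [psiN]

lemma psi_v (v m) : psi ρ R lam α β (vM k G V v m) = vH ρ R lam α β v * psi ρ R lam α β m := by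
  induction m using M_ind with
  | hz => simp
  | ha x y hx hy => simp only [map_add, hx, hy, mul_add]
  | hl n u => rw [vM_lo, psi_lo, psi_lo]; simp [psiN]

lemma psi_g (a m) : psi ρ R lam α β (gM ρ lam a m) = gH ρ R lam α β a * psi ρ R lam α β m := by
  have hA := actRel_H ρ R lam α β
  revert a
  induction m using M_ind' with
  | hz => simp
  | ha x y hx hy => intro a; simp only [map_add, hx, hy, mul_add]
  | h0 b => intro a; rw [gM_lo0, psi_lo0, psi_lo0, hA.mul]
  | hv v m hm =>
    intro a
    induction a using kG_ind with
    | h1 g =>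
      have := LinearMap.congr_fun (gM_vM ρ lam g v) m
      simp only [Module.End.mul_apply, LinearMap.add_apply] at this
      rw [this, map_add, psi_v, psi_v, hm, hm, ← mul_assoc, ← mul_assoc, hA.act, add_mul]
    | h2 x y hx hy => simp only [map_add, LinearMap.add_apply, hx, hy, add_mul]
    | h3 c x hx => simp only [map_smul, LinearMap.smul_apply, hx, smul_mul_assoc]

lemma JJ_psi (n : ℕ) : JJ ρ R lam α β n ≤ LinearMap.ker (psi ρ R lam α β) := by
  induction n with
  | zero => exact bot_le
  | succ n ih =>
    rcases n with _ | n
    · exact bot_le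
    · refine JJ_le ρ R lam α β ?_ ?_
      · intro r m _
        rw [LinearMap.mem_ker, tw_q (gm := gH ρ R lam α β) (vm := vH ρ R lam α β) (psi ρ R lam α β)
          (psi_v ρ R lam α β) (psi_g ρ R lam α β),
          quad_H, zero_smul]
      · intro v m hm
        rw [LinearMap.mem_ker, psi_v, ih hm, mul_zero]

/-! filtration -/

lemma grT0 : (grT k G V 0).map (toH k G V R ρ lam α β).toLinearMap
    = LinearMap.range (gH ρ R lam α β) := by
  have hA := actRel_H ρ R lam α β
  apply le_antisymm
  · let f : MonoidAlgebra k G →ₐ[k] HAlg k G V R ρ lam α β :=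
      AlgHom.ofLinearMap (gH ρ R lam α β) hA.one hA.mul
    have : Algebra.adjoin k (Set.range (gIn k G V)) ≤ f.range.comap (toH k G V R ρ lam α β) := by
      refine Algebra.adjoin_le ?_
      rintro _ ⟨a, rfl⟩
      exact ⟨a, rfl⟩
    rintro _ ⟨x, hx, rfl⟩
    have hx' : x ∈ Algebra.adjoin k (Set.range (gIn k G V)) := by rw [grT] at hx; exact hx
    obtain ⟨a, ha⟩ := this hx'
    exact ⟨a, ha⟩
  · rintro _ ⟨a, rfl⟩
    refine ⟨gIn k G V a, ?_, rfl⟩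
    rw [grT]
    exact Algebra.subset_adjoin (Set.mem_range_self a)

def PP (n : ℕ) : Submodule k (HAlg k G V R ρ lam α β) :=
  (grT k G V n).map (toH k G V R ρ lam α β).toLinearMap

lemma PP0 : PP ρ R lam α β 0 = LinearMap.range (gH ρ R lam α β) := grT0 ρ R lam α β

lemma PPs (n : ℕ) : PP ρ R lam α β (n+1) = PP ρ R lam α β n *
    (LinearMap.range (vH ρ R lam α β) * PP ρ R lam α β 0) := by
  rw [PP, grT, Submodule.map_mul, Submodule.map_mul]
  congr 2
  rw [← LinearMap.range_comp]; rfl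

def FQ (n : ℕ) : Submodule k (HAlg k G V R ρ lam α β) := (FF k G V n).map (psi ρ R lam α β)

lemma PP_FQ (n d : ℕ) : PP ρ R lam α β n * FQ ρ R lam α β d ≤ FQ ρ R lam α β (n + d) := by
  have h0 : ∀ d, PP ρ R lam α β 0 * FQ ρ R lam α β d ≤ FQ ρ R lam α β d := by
    intro d
    rw [PP0, Submodule.mul_le]
    rintro _ ⟨a, rfl⟩ _ ⟨m, hm, rfl⟩
    exact ⟨_, gM_FF ρ lam a hm, psi_g ρ R lam α β a m⟩
  have h1 : ∀ d, LinearMap.range (vH ρ R lam α β) * FQ ρ R lam α β d ≤ FQ ρ R lam α β (d+1) := by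
    intro d
    rw [Submodule.mul_le]
    rintro _ ⟨a, rfl⟩ _ ⟨m, hm, rfl⟩
    exact ⟨_, vM_FF a hm, psi_v ρ R lam α β a m⟩
  induction n generalizing d with
  | zero => rw [zero_add]; exact h0 d
  | succ n ih =>
    rw [PPs, mul_assoc, mul_assoc]
    refine (mul_le_mul' le_rfl ((mul_le_mul' le_rfl (h0 d)).trans (h1 d))).trans ?_
    refine (ih (d+1)).trans (le_of_eq ?_)
    congr 1; omega

lemma one_PP : 1 ≤ PP ρ R lam α β 0 := by
  rw [PP0, Submodule.one_le]
  exact ⟨1, (actRel_H ρ R lam α β).one⟩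

lemma PP_le (n : ℕ) : PP ρ R lam α β n ≤ FQ ρ R lam α β n := by
  have h : 1 ≤ FQ ρ R lam α β 0 := by
    rw [Submodule.one_le]
    exact ⟨lo k G V 0 (E0 k G V 1), lo_mem 0 _, (psi_lo0 ρ R lam α β 1).trans
      (actRel_H ρ R lam α β).one⟩
  calc PP ρ R lam α β n = PP ρ R lam α β n * 1 := (mul_one _).symm
    _ ≤ PP ρ R lam α β n * FQ ρ R lam α β 0 := mul_le_mul' le_rfl h
    _ ≤ _ := PP_FQ ρ R lam α β n 0

lemma v_PP (n : ℕ) : LinearMap.range (vH ρ R lam α β) * PP ρ R lam α β n ≤ PP ρ R lam α β (n+1) := by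
  induction n with
  | zero =>
    rw [PPs]
    calc _ = 1 * (LinearMap.range (vH ρ R lam α β) * PP ρ R lam α β 0) := (one_mul _).symm
      _ ≤ _ := mul_le_mul' (one_PP ρ R lam α β) le_rfl
  | succ n ih =>
    rw [PPs _ _ _ _ _ (n+1), PPs _ _ _ _ _ n, ← mul_assoc, ← PPs]
    exact mul_le_mul' ih le_rfl

lemma psi_PP (n : ℕ) (u : EE k G V n) : psi ρ R lam α β (lo k G V n u) ∈ PP ρ R lam α β n := by
  induction n with
  | zero =>
    obtain ⟨a, rfl⟩ := (E0 k G V).surjective u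
    rw [psi_lo0, PP0]; exact ⟨a, rfl⟩
  | succ n ih =>
    induction u using E_ind with
    | hz => simp
    | ha x y hx hy => rw [map_add, map_add]; exact add_mem hx hy
    | ht v w =>
      rw [← vM_lo, psi_v]
      exact v_PP ρ R lam α β n (Submodule.mul_mem_mul ⟨v, rfl⟩ (ih w))

lemma filtH_eq (d : ℕ) : filtH k G V R ρ lam α β d = FQ ρ R lam α β d := by
  have hs : ∀ d, filtH k G V R ρ lam α β (d+1) = filtH k G V R ρ lam α β d ⊔ PP ρ R lam α β (d+1) :=
    fun d => Submodule.map_sup _ _ _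
  have hm : ∀ {i j}, i ≤ j → FQ ρ R lam α β i ≤ FQ ρ R lam α β j :=
    fun h => Submodule.map_mono (FF_mono h)
  apply le_antisymm
  · induction d with
    | zero => exact PP_le ρ R lam α β 0
    | succ d ih =>
      rw [hs]
      exact sup_le (ih.trans (hm (Nat.le_succ d))) (PP_le ρ R lam α β _)
  · have h2 : ∀ d, ∀ j ≤ d, PP ρ R lam α β j ≤ filtH k G V R ρ lam α β d := by
      intro d
      induction d with
      | zero =>
        intro j hj
        obtain rfl : j = 0 := by omega
        exact le_rfl
      | succ d ih =>
        intro j hj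
        rw [hs]
        rcases Nat.lt_or_ge d j with h | h
        · obtain rfl : j = d + 1 := by omega
          exact le_sup_right
        · exact (ih j h).trans le_sup_left
    rw [FQ, Submodule.map_le_iff_le_comap]
    exact FF_le fun j hj u => h2 d j hj (psi_PP ρ R lam α β j u)

lemma filtH_finrank [Fintype G] [FiniteDimensional k V] (d : ℕ) :
    Module.finrank k (filtH k G V R ρ lam α β d)
      + Module.finrank k (LinearMap.ker (psi ρ R lam α β) ⊓ FF k G V d : Submodule k (MM k G V))
      = Module.finrank k (FF k G V d) := by
  rw [filtH_eq]
  have h := LinearMap.finrank_range_add_finrank_ker ((psi ρ R lam α β).domRestrict (FF k G V d))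
  rw [LinearMap.range_domRestrict] at h
  rw [← h, FQ]
  congr 1
  refine LinearEquiv.finrank_eq ?_
  refine ((LinearEquiv.ofEq _ _ ?_).trans (Submodule.comapSubtypeEquivOfLe (p := LinearMap.ker (psi ρ R lam α β) ⊓ FF k G V d) (q := FF k G V d) inf_le_right)).symm
  ext m
  simp [LinearMap.mem_ker]

end PartNine

section PartTen

variable {k G V : Type} [Field k] [Group G] [AddCommGroup V] [Module k V]
variable {ρ : Representation k G V} {R : Submodule k (V ⊗[k] V)}
variable {lam : MonoidAlgebra k G ⊗[k] V →ₗ[k] MonoidAlgebra k G}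
    {α : R →ₗ[k] (V ⊗[k] MonoidAlgebra k G)}
    {β : R →ₗ[k] MonoidAlgebra k G}
variable {hR : ∀ (g : G) (x : V ⊗[k] V), x ∈ R → TensorProduct.map (ρ g) (ρ g) x ∈ R}

variable (ρ R lam α β) in
/-- universal property of `H`. -/
lemma H_lift {A : Type} [Ring A] [Algebra k A] {gm : MonoidAlgebra k G →ₗ[k] A} {vm : V →ₗ[k] A}
    (hA : ActRel gm vm ρ lam) (hq : ∀ r, qR gm vm R α β r = 0) :
    ∃ Φ : HAlg k G V R ρ lam α β →ₐ[k] A, (∀ a, Φ (gH ρ R lam α β a) = gm a) ∧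
      (∀ v, Φ (vH ρ R lam α β v) = vm v) := by
  let Φ₀ : FreeAlg k G V →ₐ[k] A := TensorAlgebra.lift k (gm.coprod vm)
  have hg : ∀ a, Φ₀ (gIn k G V a) = gm a := fun a => by simp [Φ₀, gIn]
  have hv : ∀ a, Φ₀ (vIn k G V a) = vm a := fun a => by simp [Φ₀, vIn]
  have hVV : ∀ t, Φ₀ (mulVV k G V t) = mVV vm t := by
    intro t
    induction t using TensorProduct.induction_on with
    | zero => simp
    | add x y hx hy => simp only [map_add, hx, hy]
    | tmul a b => simp [mulVV, hv]
  have hVG : ∀ t, Φ₀ (embVG k G V t) = mVG gm vm t := by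
    intro t
    induction t using TensorProduct.induction_on with
    | zero => simp
    | add x y hx hy => simp only [map_add, hx, hy]
    | tmul a b => simp [embVG, hv, hg]
  have hrel : ∀ ⦃x y⦄, GRel k G V R ρ lam α β x y → Φ₀ x = Φ₀ y := by
    intro x y h
    cases h with
    | unit => exact (hg 1).trans (hA.one.trans (map_one Φ₀).symm)
    | gmul x y => rw [map_mul, hg, hg, hg, hA.mul]
    | act g v => rw [map_mul, map_add, map_mul, hg, hg, hv, hv, hA.act]
    | quad r =>
      rw [hVV, map_add, hVG, hg]
      exact sub_eq_zero.1 (hq r)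
  let Φ := RingQuot.liftAlgHom k ⟨Φ₀, hrel⟩
  have hΦ : ∀ x, Φ (toH k G V R ρ lam α β x) = Φ₀ x :=
    fun x => RingQuot.liftAlgHom_mkAlgHom_apply k Φ₀ hrel x
  exact ⟨Φ, fun a => (hΦ _).trans (hg a), fun a => (hΦ _).trans (hv a)⟩

lemma ker_psi (hc : Cond ρ R hR lam α β) {m : MM k G V}
    (hm : psi ρ R lam α β m = 0) : ∃ n, m ∈ JJ ρ R lam α β n := by
  have hM := actRel_M hc.c1
  let J : Submodule k (MM k G V) := ⨆ n, JJ ρ R lam α β n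
  have hJ : ∀ m, m ∈ J ↔ ∃ n, m ∈ JJ ρ R lam α β n := fun m =>
    Submodule.mem_iSup_of_directed _ (JJ_mono ρ R lam α β).directed_le
  have sg : ∀ a, gM ρ lam a ∈ Submodule.compatibleMaps J J := by
    intro a m hm
    obtain ⟨n, hn⟩ := (hJ m).1 hm
    exact (hJ _).2 ⟨n, gM_JJ hc a hn⟩
  have sv : ∀ a, vM k G V a ∈ Submodule.compatibleMaps J J := by
    intro a m hm
    obtain ⟨n, hn⟩ := (hJ m).1 hm
    exact (hJ _).2 ⟨n+1, vM_JJ ρ R lam α β a hn⟩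
  let gB : MonoidAlgebra k G →ₗ[k] Module.End k (MM k G V ⧸ J) :=
    (Submodule.mapQLinear J J).comp ((gM ρ lam).codRestrict _ sg)
  let vB : V →ₗ[k] Module.End k (MM k G V ⧸ J) :=
    (Submodule.mapQLinear J J).comp ((vM k G V).codRestrict _ sv)
  have hg : ∀ a m, J.mkQ (gM ρ lam a m) = gB a • J.mkQ m := fun a m => rfl
  have hv : ∀ a m, J.mkQ (vM k G V a m) = vB a • J.mkQ m := fun a m => rfl
  have ext : ∀ f f' : Module.End k (MM k G V ⧸ J), (∀ m, f • J.mkQ m = f' • J.mkQ m) → f = f' := by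
    intro f f' h
    refine LinearMap.ext fun x => ?_
    obtain ⟨m, rfl⟩ := J.mkQ_surjective x
    exact h m
  have hA : ActRel gB vB ρ lam := by
    refine ⟨?_, ?_, ?_⟩
    · refine ext _ _ fun m => ?_
      rw [← hg, hM.one, one_smul]; rfl
    · intro x y
      refine ext _ _ fun m => ?_
      rw [mul_smul, ← hg, ← hg, ← hg, hM.mul]; rfl
    · intro g v
      refine ext _ _ fun m => ?_
      rw [mul_smul, add_smul, mul_smul, ← hv, ← hg, ← hg, ← hv, ← hg, ← map_add]
      exact congrArg J.mkQ (LinearMap.congr_fun (hM.act g v) m)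
  have hq : ∀ r, qR gB vB R α β r = 0 := by
    intro r
    refine ext _ _ fun m => ?_
    rw [zero_smul, ← tw_q J.mkQ hv hg]
    refine (Submodule.Quotient.mk_eq_zero _).2 ?_
    obtain ⟨n, hn⟩ := FF_exists m
    exact (hJ _).2 ⟨n+2, q_JJ ρ R lam α β r hn⟩
  obtain ⟨Φ, h1, h2⟩ := H_lift ρ R lam α β hA hq
  have key : ∀ m, Φ (psi ρ R lam α β m) • J.mkQ (lo k G V 0 (E0 k G V 1)) = J.mkQ m := by
    intro m
    induction m using M_ind' with
    | hz => simp
    | ha x y hx hy => rw [map_add, map_add, map_add, add_smul, hx, hy]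
    | h0 a => rw [psi_lo0, h1, ← hg, gM_lo0, mul_one]
    | hv v m hm => rw [psi_v, map_mul, h2, mul_smul, hm, ← hv]
  have := key m
  rw [hm, map_zero, zero_smul] at this
  exact (hJ m).1 ((Submodule.Quotient.mk_eq_zero _).1 this.symm)

lemma ker_psi_FF [Fintype G] [FiniteDimensional k V] (hK : IsKoszul k V R)
    (hc : Cond ρ R hR lam α β) (d : ℕ) :
    LinearMap.ker (psi ρ R lam α β) ⊓ FF k G V d = JJ ρ R lam α β d := by
  apply le_antisymm
  · rintro m ⟨h1, h2⟩
    obtain ⟨n, hn⟩ := ker_psi hc h1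
    exact JJ_inf hK hc n d hn h2
  · exact le_inf (JJ_psi ρ R lam α β d) (JJ_le_FF ρ R lam α β d)

theorem pbw_of_cond [Fintype G] [FiniteDimensional k V] (hK : IsKoszul k V R)
    (hc : Cond ρ R hR lam α β) : IsPBW k G V R ρ lam α β := by
  intro d
  have h1 := filtH_finrank ρ R lam α β d
  have h2 := filtH_finrank ρ R 0 0 0 d
  rw [ker_psi_FF hK hc] at h1
  rw [ker_psi_FF hK (cond_zero ρ R hR)] at h2
  rw [JJ_finrank_eq hK hc (cond_zero ρ R hR)] at h1
  omega

end PartTen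

section PartEleven

variable (k G V : Type) [Field k] [Group G] [AddCommGroup V] [Module k V]

def eL1 : V ⊗[k] MonoidAlgebra k G ≃ₗ[k] EE k G V 1 :=
  (TensorProduct.congr (LinearEquiv.refl k V) (E0 k G V)).trans (ES k G V 0)

def eL2 : V ⊗[k] (V ⊗[k] MonoidAlgebra k G) ≃ₗ[k] EE k G V 2 :=
  (TensorProduct.congr (LinearEquiv.refl k V) (eL1 k G V)).trans (ES k G V 1)

variable {k G V}

lemma lo1_tmul (v : V) (a : MonoidAlgebra k G) :
    lo k G V 1 (eL1 k G V (v ⊗ₜ a)) = vM k G V v (lo k G V 0 (E0 k G V a)) := by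
  simp [eL1]

lemma lo2_tmul (v : V) (s : V ⊗[k] MonoidAlgebra k G) :
    lo k G V 2 (eL2 k G V (v ⊗ₜ s)) = vM k G V v (lo k G V 1 (eL1 k G V s)) := by
  simp [eL2]

variable (ρ : Representation k G V) (R : Submodule k (V ⊗[k] V))
variable (lam : MonoidAlgebra k G ⊗[k] V →ₗ[k] MonoidAlgebra k G)
    (α : R →ₗ[k] (V ⊗[k] MonoidAlgebra k G))
    (β : R →ₗ[k] MonoidAlgebra k G)

lemma psi_lo1 (s) : psi ρ R lam α β (lo k G V 1 (eL1 k G V s))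
    = mVG (gH ρ R lam α β) (vH ρ R lam α β) s := by
  induction s using TensorProduct.induction_on with
  | zero => simp
  | add x y hx hy => simp only [map_add, hx, hy]
  | tmul v a => rw [lo1_tmul, psi_v, psi_lo0, mVG_tmul]

lemma psi_lo2 (s) : psi ρ R lam α β (lo k G V 2 (eL2 k G V s))
    = mVVG (gH ρ R lam α β) (vH ρ R lam α β) s := by
  induction s using TensorProduct.induction_on with
  | zero => simp
  | add x y hx hy => simp only [map_add, hx, hy]
  | tmul v a => rw [lo2_tmul, psi_v, psi_lo1, mVVG_tmul]

def TT : R ⊗[k] MonoidAlgebra k G →ₗ[k] MM k G V :=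
  (lo k G V 2).comp ((eL2 k G V).toLinearMap.comp (inclRG k G V R))
   - (lo k G V 1).comp ((eL1 k G V).toLinearMap.comp (αext k G V R α))
   - (lo k G V 0).comp ((E0 k G V).toLinearMap.comp (βext k G V R β))

lemma TT_apply (y) : TT R α β y = lo k G V 2 (eL2 k G V (inclRG k G V R y))
    - lo k G V 1 (eL1 k G V (αext k G V R α y)) - lo k G V 0 (E0 k G V (βext k G V R β y)) := rfl

lemma lo_inj {t t' : V ⊗[k] (V ⊗[k] MonoidAlgebra k G)} {s s' : V ⊗[k] MonoidAlgebra k G}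
    {a a' : MonoidAlgebra k G}
    (h : lo k G V 2 (eL2 k G V t) - lo k G V 1 (eL1 k G V s) - lo k G V 0 (E0 k G V a)
      = lo k G V 2 (eL2 k G V t') - lo k G V 1 (eL1 k G V s') - lo k G V 0 (E0 k G V a')) :
    t = t' ∧ s = s' ∧ a = a' := by
  have h2 := congrArg (cpt k G V 2) h
  have h1 := congrArg (cpt k G V 1) h
  have h0 := congrArg (cpt k G V 0) h
  simp only [map_sub, cpt_lo] at h0 h1 h2
  rw [cpt_lo_ne (by omega), cpt_lo_ne (by omega), cpt_lo_ne (by omega),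
    cpt_lo_ne (by omega)] at h0 h1 h2
  simp only [sub_zero, zero_sub, neg_inj] at h0 h1 h2
  exact ⟨(eL2 k G V).injective h2, (eL1 k G V).injective h1, (E0 k G V).injective h0⟩

lemma inclRG_inj : Function.Injective (inclRG k G V R) := by
  rw [inclRG, LinearMap.coe_comp, LinearEquiv.coe_coe]
  exact (TensorProduct.assoc k V V (MonoidAlgebra k G)).injective.comp
    (Module.Flat.rTensor_preserves_injective_linearMap R.subtype R.injective_subtype)

lemma TT_inj : Function.Injective (TT R α β) := fun _ _ h =>
  inclRG_inj R (lo_inj h).1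

lemma TT_mem (y) : TT R α β y ∈ LinearMap.ker (psi ρ R lam α β) ⊓ FF k G V 2 := by
  have hA := actRel_H ρ R lam α β
  refine ⟨?_, ?_⟩
  · rw [SetLike.mem_coe, LinearMap.mem_ker, TT_apply, map_sub, map_sub, psi_lo2, psi_lo1, psi_lo0, sub_sub,
      ← hA.I6a, ← hA.I6b, sub_eq_zero]
    congr 3
    ext r
    exact sub_eq_zero.1 (quad_H ρ R lam α β r)
  · exact sub_mem (sub_mem (lo_mem _ _) (FF_mono (by omega) (lo_mem _ _)))
      (FF_mono (by omega) (lo_mem _ _))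

lemma JJ2_le : JJ ρ R 0 0 0 2 ≤ LinearMap.range (TT (k := k) (G := G) R 0 0) := by
  refine JJ_le ρ R 0 0 0 ?_ ?_
  · intro r m hm
    obtain ⟨u, rfl⟩ := FF_zero hm
    obtain ⟨a, rfl⟩ := (E0 k G V).surjective u
    refine ⟨r ⊗ₜ a, ?_⟩
    have e : qM ρ R 0 0 0 r (lo k G V 0 (E0 k G V a))
        = mVV (vM k G V) r (lo k G V 0 (E0 k G V a)) := by
      simp [qM, qR_apply, gam_apply]
    rw [e, mVV_lo, TT_apply]
    have e1 : αext k G V R 0 = 0 := by simp [αext]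
    have e2 : βext k G V R 0 = 0 := by simp [βext]
    simp only [e1, e2, LinearMap.zero_apply, map_zero, sub_zero]
    congr 1
    have : ∀ t : V ⊗[k] V, eL2 k G V (TensorProduct.assoc k V V _ (t ⊗ₜ a))
        = ES2 k G V 0 (t ⊗ₜ E0 k G V a) := by
      intro t
      induction t using TensorProduct.induction_on with
      | zero => simp
      | add x y hx hy => simp only [add_tmul, map_add, hx, hy]
      | tmul v w => simp [eL2, eL1]
    exact this r
  · intro v m hm
    have : m = 0 := hm
    rw [this, map_zero]; exact zero_mem _

variable {ρ R lam α β}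
variable {hR : ∀ (g : G) (x : V ⊗[k] V), x ∈ R → TensorProduct.map (ρ g) (ρ g) x ∈ R}

lemma ker2 [Fintype G] [FiniteDimensional k V] (hR : ∀ (g : G) (x : V ⊗[k] V), x ∈ R → TensorProduct.map (ρ g) (ρ g) x ∈ R)
    (hK : IsKoszul k V R)
    (hp : IsPBW k G V R ρ lam α β) :
    LinearMap.range (TT (G := G) R α β) = LinearMap.ker (psi ρ R lam α β) ⊓ FF k G V 2 := by
  have h1 := filtH_finrank ρ R lam α β 2
  have h2 := filtH_finrank ρ R 0 0 0 2
  rw [ker_psi_FF hK (cond_zero ρ R hR)] at h2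
  have h3 := hp 2
  have h4 := Submodule.finrank_mono (JJ2_le (G := G) ρ R)
  have h5 := LinearMap.finrank_range_le (TT (k := k) (G := G) R 0 0)
  have h6 := LinearMap.finrank_range_of_inj (TT_inj (G := G) R α β)
  refine Submodule.eq_of_le_of_finrank_le ?_ (by omega)
  rintro _ ⟨y, rfl⟩
  exact TT_mem ρ R lam α β y

lemma H_key [Fintype G] [FiniteDimensional k V] (hR : ∀ (g : G) (x : V ⊗[k] V), x ∈ R → TensorProduct.map (ρ g) (ρ g) x ∈ R)
    (hK : IsKoszul k V R)
    (hp : IsPBW k G V R ρ lam α β) (t : V ⊗[k] (V ⊗[k] MonoidAlgebra k G))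
    (s : V ⊗[k] MonoidAlgebra k G) (a : MonoidAlgebra k G)
    (h : mVVG (gH ρ R lam α β) (vH ρ R lam α β) t + mVG (gH ρ R lam α β) (vH ρ R lam α β) s
      + gH ρ R lam α β a = 0) :
    ∃ y, inclRG k G V R y = t ∧ αext k G V R α y + s = 0 ∧ βext k G V R β y + a = 0 := by
  have hm : lo k G V 2 (eL2 k G V t) - lo k G V 1 (eL1 k G V (-s)) - lo k G V 0 (E0 k G V (-a))
      ∈ LinearMap.ker (psi ρ R lam α β) ⊓ FF k G V 2 := by
    refine ⟨?_, ?_⟩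
    · rw [SetLike.mem_coe, LinearMap.mem_ker, map_sub, map_sub, psi_lo2, psi_lo1, psi_lo0, map_neg, map_neg,
        sub_neg_eq_add, sub_neg_eq_add, h]
    · exact sub_mem (sub_mem (lo_mem _ _) (FF_mono (by omega) (lo_mem _ _)))
        (FF_mono (by omega) (lo_mem _ _))
  rw [← ker2 hR hK hp] at hm
  obtain ⟨y, hy⟩ := hm
  rw [TT_apply] at hy
  obtain ⟨h1, h2, h3⟩ := lo_inj hy
  exact ⟨y, h1, by rw [h2]; simp, by rw [h3]; simp⟩

lemma H_key1 [Fintype G] [FiniteDimensional k V] (hR : ∀ (g : G) (x : V ⊗[k] V), x ∈ R → TensorProduct.map (ρ g) (ρ g) x ∈ R)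
    (hK : IsKoszul k V R)
    (hp : IsPBW k G V R ρ lam α β)
    (s : V ⊗[k] MonoidAlgebra k G) (a : MonoidAlgebra k G)
    (h : mVG (gH ρ R lam α β) (vH ρ R lam α β) s
      + gH ρ R lam α β a = 0) : s = 0 ∧ a = 0 := by
  obtain ⟨y, h1, h2, h3⟩ := H_key hR hK hp 0 s a (by rw [map_zero, zero_add, h])
  have : y = 0 := inclRG_inj R (by rw [h1, map_zero])
  subst this
  rw [map_zero, zero_add] at h2 h3
  exact ⟨h2, h3⟩

lemma cond_of_pbw [Fintype G] [FiniteDimensional k V] (hK : IsKoszul k V R)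
    (hp : IsPBW k G V R ρ lam α β) : Cond ρ R hR lam α β := by
  have hA := actRel_H ρ R lam α β
  have hq : ∀ r : R, mVV (vH ρ R lam α β) (r : V ⊗[k] V)
      = mVG (gH ρ R lam α β) (vH ρ R lam α β) (α r) + gH ρ R lam α β (β r) :=
    fun r => sub_eq_zero.1 (quad_H ρ R lam α β r)
  have key : ∀ g r, lact ρ g (α r)
      - (ract (MonoidAlgebra.of k G g) (α (rActR k G V R ρ hR g r)) + c3 ρ lam g r) = 0 ∧
      (MonoidAlgebra.of k G g * β r
      + LinearMap.mul' k _ (TensorProduct.map (lamMk k G V lam g) LinearMap.id (α r)))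
      - (β (rActR k G V R ρ hR g r) * MonoidAlgebra.of k G g + c2 lam g r) = 0 := by
    intro g r
    refine H_key1 hR hK hp _ _ ?_
    have i := hA.I2 g (r : V ⊗[k] V)
    have : ((rActR k G V R ρ hR g r : R) : V ⊗[k] V) = TensorProduct.map (ρ g) (ρ g) r := rfl
    rw [← this, hq, hq, mul_add, add_mul, hA.I2', hA.I2'', ← hA.mul, ← hA.mul] at i
    simp only [map_add, map_sub]
    rw [← sub_eq_zero] at i
    rw [← i]
    abel
  refine ⟨?_, fun g r => sub_eq_zero.1 (key g r).2, fun g r => sub_eq_zero.1 (key g r).1, ?_⟩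
  · intro g h v
    refine sub_eq_zero.1 (H_key1 hR hK hp 0 _ ?_).2
    have i1 := hA.act (g * h) v
    rw [map_mul, hA.mul, mul_assoc, hA.act h v, mul_add, ← mul_assoc, hA.act g, add_mul,
      map_mul, Module.End.mul_apply] at i1
    rw [map_zero, zero_add, map_sub, map_add, hA.mul, hA.mul, sub_eq_zero]
    rw [mul_assoc, add_assoc] at i1
    rw [← add_left_cancel i1, add_comm]
  · intro x₁ x₂ hx
    have hq' : (mVV (vH ρ R lam α β)).comp R.subtype
      = gam (gH ρ R lam α β) (vH ρ R lam α β) R α β := LinearMap.ext hq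
    have t := tri (vH ρ R lam α β) R x₁ x₂ hx
    have i5 := hA.I5 R α β x₁ x₂
    rw [hq'] at t
    rw [t, sub_self] at i5
    exact H_key hR hK hp _ _ _ i5.symm

end PartEleven

section PartTwelve

variable {k G V : Type} [Field k] [Group G] [AddCommGroup V] [Module k V]
variable (ρ : Representation k G V) (R : Submodule k (V ⊗[k] V))
variable (lam : MonoidAlgebra k G ⊗[k] V →ₗ[k] MonoidAlgebra k G)
    (α : R →ₗ[k] (V ⊗[k] MonoidAlgebra k G))
    (β : R →ₗ[k] MonoidAlgebra k G)

lemma actRel_A : ActRel (gA k G V R ρ) (vA k G V R ρ) ρ 0 := actRel_H ρ R 0 0 0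

lemma embVGA_eq : embVGA k G V R ρ = mVG (gA k G V R ρ) (vA k G V R ρ) := rfl

lemma embVVGA_eq : embVVGA k G V R ρ = mVVG (gA k G V R ρ) (vA k G V R ρ) := rfl

lemma embGVA_eq (x) : embGVA k G V R ρ x = embVGA k G V R ρ (sigma k G V ρ x) := by
  induction x using TensorProduct.induction_on with
  | zero => simp
  | add x y hx hy => simp only [map_add, hx, hy]
  | tmul a w =>
    have := (actRel_A ρ R).act' a w
    simp only [LinearMap.zero_apply, map_zero, add_zero] at this
    rw [embVGA_eq, ← this]; simp [embGVA]

lemma embVGVA_eq (x) : embVGVA k G V R ρ x = embVVGA k G V R ρ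
    (TensorProduct.map LinearMap.id (sigma k G V ρ)
      (TensorProduct.assoc k V (MonoidAlgebra k G) V x)) := by
  induction x using TensorProduct.induction_on with
  | zero => simp
  | add x y hx hy => simp only [map_add, hx, hy]
  | tmul s w =>
    have := (actRel_A ρ R).I4 s w
    rw [TensorProduct.map_zero_right] at this
    simp only [LinearMap.zero_apply, map_zero, add_zero] at this
    rw [embVVGA_eq, ← this]; simp [embVGVA, embVGA_eq]

lemma sum_aux [Fintype G] (w : V) (s : V ⊗[k] MonoidAlgebra k G) :
    ∑ g : G, (TensorProduct.rid k V (TensorProduct.map LinearMap.id ((Finsupp.lapply g).comp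
      (MonoidAlgebra.coeffLinearEquiv k).toLinearMap) s)) ⊗ₜ[k] (lamMk k G V lam g w)
    = TensorProduct.map LinearMap.id lam
      (TensorProduct.assoc k V (MonoidAlgebra k G) V (s ⊗ₜ w)) := by
  induction s using TensorProduct.induction_on with
  | zero => simp
  | add x y hx hy => simp only [map_add, add_tmul, Finset.sum_add_distrib, hx, hy]
  | tmul v a =>
    simp only [TensorProduct.map_tmul, TensorProduct.assoc_tmul, LinearMap.id_apply,
      TensorProduct.rid_tmul, TensorProduct.smul_tmul]
    rw [← TensorProduct.tmul_sum]
    congr 1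
    induction a using kG_ind with
    | h1 g =>
      classical
      rw [Finset.sum_eq_single g]
      · simp [lamMk]
      · intro b _ hb
        simp [hb.symm]
      · simp
    | h2 x y hx hy => simp only [map_add, add_tmul, add_smul, Finset.sum_add_distrib, hx, hy]
    | h3 c x hx =>
      rw [← TensorProduct.smul_tmul', map_smul, ← hx, Finset.smul_sum]
      simp only [map_smul, smul_assoc]

lemma sumAlphaLam_eq [Fintype G] (x : R ⊗[k] V) : sumAlphaLam k G V R ρ lam α x
    = embVGA k G V R ρ (TensorProduct.map LinearMap.id lam
      (TensorProduct.assoc k V (MonoidAlgebra k G) V (TensorProduct.map α LinearMap.id x))) := by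
  induction x using TensorProduct.induction_on with
  | zero => simp
  | add x y hx hy => simp only [map_add, hx, hy]
  | tmul r w =>
    rw [TensorProduct.map_tmul, LinearMap.id_apply, ← sum_aux, map_sum, sumAlphaLam,
      LinearMap.sum_apply]
    rfl

lemma mulgv (f : V →ₗ[k] MonoidAlgebra k G) (t : V ⊗[k] V) :
    (LinearMap.mul' k (SkewA k G V R ρ))
            (TensorProduct.map ((gA k G V R ρ).comp f) (vA k G V R ρ) t)
     = embVGA k G V R ρ (sigma k G V ρ (TensorProduct.map f LinearMap.id t)) := by
  rw [← embGVA_eq]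
  induction t using TensorProduct.induction_on with
  | zero => simp
  | add x y hx hy => simp only [map_add, hx, hy]
  | tmul r w => simp [embGVA]

lemma mulvg (f : V →ₗ[k] MonoidAlgebra k G) (e : V →ₗ[k] V) (t : V ⊗[k] V) :
    (LinearMap.mul' k (SkewA k G V R ρ))
            (TensorProduct.map ((vA k G V R ρ).comp e) ((gA k G V R ρ).comp f) t)
     = embVGA k G V R ρ (TensorProduct.map e f t) := by
  induction t using TensorProduct.induction_on with
  | zero => simp
  | add x y hx hy => simp only [map_add, hx, hy]
  | tmul r w => simp [embVGA]

lemma A_mul (a b : MonoidAlgebra k G) :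
    gA k G V R ρ a * gA k G V R ρ b = gA k G V R ρ (a * b) := ((actRel_A ρ R).mul a b).symm

lemma A_lact (g : G) (s) : gA k G V R ρ (ofg k G g) * embVGA k G V R ρ s
    = embVGA k G V R ρ (lact ρ g s) := by
  have := (actRel_A ρ R).I2' g s
  have e : lamMk k G V (0 : MonoidAlgebra k G ⊗[k] V →ₗ[k] MonoidAlgebra k G) g = 0 := by
    simp [lamMk]
  rw [e, TensorProduct.map_zero_left] at this
  simp only [LinearMap.zero_apply, map_zero, add_zero] at this
  exact this

lemma A_ract (a : MonoidAlgebra k G) (s) : embVGA k G V R ρ s * gA k G V R ρ a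
    = embVGA k G V R ρ (ract a s) := (actRel_A ρ R).I2'' a s

variable {ρ R lam α β}

section
variable [Fintype G] [FiniteDimensional k V]
  (hR : ∀ (g : G) (x : V ⊗[k] V), x ∈ R → TensorProduct.map (ρ g) (ρ g) x ∈ R)
  (hK : IsKoszul k V R)
include hR hK

lemma gA_inj : Function.Injective (gA k G V R ρ) := by
  refine (injective_iff_map_eq_zero _).2 fun a ha => ?_
  exact (H_key1 (lam := 0) (α := 0) (β := 0) hR hK (fun _ => rfl) 0 a
    (by rw [map_zero, zero_add]; exact ha)).2

lemma embVGA_inj : Function.Injective (embVGA k G V R ρ) := by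
  refine (injective_iff_map_eq_zero _).2 fun a ha => ?_
  exact (H_key1 (lam := 0) (α := 0) (β := 0) hR hK (fun _ => rfl) a 0
    (by rw [map_zero, add_zero]; exact ha)).1

lemma embVVGA_ker (t) (h : embVVGA k G V R ρ t = 0) : ∃ y, inclRG k G V R y = t := by
  obtain ⟨y, hy, _⟩ := (H_key (lam := 0) (α := 0) (β := 0) hR hK (fun _ => rfl) t 0 0
    (by rw [map_zero, add_zero, map_zero, add_zero]; exact h))
  exact ⟨y, hy⟩
end

lemma embVVGA_incl (y) : embVVGA k G V R ρ (inclRG k G V R y) = 0 := by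
  rw [embVVGA_eq, ← (actRel_A ρ R).I6a]
  have : (mVV (vA k G V R ρ)).comp R.subtype = 0 := by
    ext r
    have := quad_H (G := G) ρ R 0 0 0 r
    rw [qR_apply, gam_apply] at this
    simp only [LinearMap.zero_apply, map_zero, add_zero, sub_zero] at this
    exact this
  rw [this, TensorProduct.map_zero_left]; simp

end PartTwelve

/-- **Theorem 2.2 (main theorem)** of Shepler–Witherspoon, "Deforming group actions on
Koszul algebras".  Let `G` be a finite group, `V` a finite dimensional `kG`-module and
`S = T(V)/(R)` a Koszul algebra with `R ⊆ V ⊗ V` closed under the `G`-action.  A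
filtered algebra `H` is a PBW deformation of `S ⋊ G` iff `H ≅ H_{λ,α,β}` for parameters
`α : R → V ⊗ kG`, `β : R → kG`, `λ : kG ⊗ V → kG` satisfying conditions (1)–(6); every
such filtered algebra is presented by parameters (Section 2 of the paper), so the
theorem is stated as:  for every choice of parameters, `H_{λ,α,β}` is a PBW deformation
of `S ⋊ G` iff conditions (1)–(6) hold upon projection of the images of the maps to
`S ⋊ G`.  In (4)–(6), an element `x ∈ (V ⊗ R) ∩ (R ⊗ V) ⊆ V ⊗ V ⊗ V` is encoded by its
two presentations `x₁ ∈ R ⊗ V`, `x₂ ∈ V ⊗ R`, and (6) guarantees that the element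
`((1 ⊗ σ)(α ⊗ 1) − 1 ⊗ α)(x)` appearing in (4) and (5) lies in `R ⊗ kG`, encoded by the
(necessarily unique) `y` with `inclRG y = Theta x₁ x₂`. -/
theorem pbw_deformation_of_koszul_skew_group_algebra
    (k G V : Type) [Field k] [Group G] [Fintype G] [AddCommGroup V] [Module k V]
    [FiniteDimensional k V] (h2 : (2 : k) ≠ 0)
    (ρ : Representation k G V) (R : Submodule k (V ⊗[k] V))
    (hR : ∀ (g : G), ∀ x ∈ R, TensorProduct.map (ρ g) (ρ g) x ∈ R)
    (hKoszul : IsKoszul k V R)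
    (lam : MonoidAlgebra k G ⊗[k] V →ₗ[k] MonoidAlgebra k G)
    (α : R →ₗ[k] (V ⊗[k] MonoidAlgebra k G))
    (β : R →ₗ[k] MonoidAlgebra k G) :
    IsPBW k G V R ρ lam α β ↔
      -- (1)  1⊗λ − λ(m⊗1) + (λ⊗1)(1⊗σ) = 0  on kG ⊗ kG ⊗ V
      ((∀ (g h : G) (v : V),
        gA k G V R ρ (ofg k G g) * gA k G V R ρ (lamMk k G V lam h v)
          - gA k G V R ρ (lam ((ofg k G g * ofg k G h) ⊗ₜ[k] v))
          + gA k G V R ρ (lamMk k G V lam g (ρ h v)) * gA k G V R ρ (ofg k G h) = 0) ∧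
      -- (2)  λ(λ⊗1) − λ(1⊗α) = 1⊗β − (β⊗1)(1⊗σ)(σ⊗1)  on kG ⊗ R
      (∀ (g : G) (r : R),
        gA k G V R ρ (lam (TensorProduct.map (lamMk k G V lam g) LinearMap.id (r : V ⊗[k] V)))
          - gA k G V R ρ ((LinearMap.mul' k (MonoidAlgebra k G))
              (TensorProduct.map (lamMk k G V lam g) LinearMap.id (α r)))
        = gA k G V R ρ (ofg k G g) * gA k G V R ρ (β r)
          - gA k G V R ρ (β (rActR k G V R ρ hR g r)) * gA k G V R ρ (ofg k G g)) ∧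
      -- (3)  1⊗α − (α⊗1)(1⊗σ)(σ⊗1) = λ⊗1 + (1⊗λ)(σ⊗1)  on kG ⊗ R
      (∀ (g : G) (r : R),
        gA k G V R ρ (ofg k G g) * embVGA k G V R ρ (α r)
          - embVGA k G V R ρ (α (rActR k G V R ρ hR g r)) * gA k G V R ρ (ofg k G g)
        = (LinearMap.mul' k (SkewA k G V R ρ))
            (TensorProduct.map ((gA k G V R ρ).comp (lamMk k G V lam g)) (vA k G V R ρ)
              (r : V ⊗[k] V))
          + (LinearMap.mul' k (SkewA k G V R ρ))
            (TensorProduct.map ((vA k G V R ρ).comp (ρ g)) ((gA k G V R ρ).comp (lamMk k G V lam g))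
              (r : V ⊗[k] V))) ∧
      -- (4)  α((1⊗σ)(α⊗1) − 1⊗α) + Σ_g α_g ⊗ λ(g⊗−) = 1⊗β − β⊗1  on (V⊗R) ∩ (R⊗V)
      (∀ (x₁ : (R : Submodule k (V ⊗[k] V)) ⊗[k] V) (x₂ : V ⊗[k] (R : Submodule k (V ⊗[k] V))),
        inclRV k V R x₁ = inclVR k V R x₂ →
        ∀ y : (R : Submodule k (V ⊗[k] V)) ⊗[k] MonoidAlgebra k G,
          inclRG k G V R y = Theta k G V R ρ α x₁ x₂ →
          embVGA k G V R ρ (αext k G V R α y) + sumAlphaLam k G V R ρ lam α x₁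
            = embVGA k G V R ρ ((TensorProduct.map LinearMap.id β) x₂)
              - embGVA k G V R ρ ((TensorProduct.map β LinearMap.id) x₁)) ∧
      -- (5)  β((1⊗σ)(α⊗1) − 1⊗α) = −λ(β⊗1)  on (V⊗R) ∩ (R⊗V)
      (∀ (x₁ : (R : Submodule k (V ⊗[k] V)) ⊗[k] V) (x₂ : V ⊗[k] (R : Submodule k (V ⊗[k] V))),
        inclRV k V R x₁ = inclVR k V R x₂ →
        ∀ y : (R : Submodule k (V ⊗[k] V)) ⊗[k] MonoidAlgebra k G,
          inclRG k G V R y = Theta k G V R ρ α x₁ x₂ →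
          gA k G V R ρ (βext k G V R β y)
            = - gA k G V R ρ (lam ((TensorProduct.map β LinearMap.id) x₁))) ∧
      -- (6)  α⊗1 − 1⊗α = 0  on (V⊗R) ∩ (R⊗V)
      (∀ (x₁ : (R : Submodule k (V ⊗[k] V)) ⊗[k] V) (x₂ : V ⊗[k] (R : Submodule k (V ⊗[k] V))),
        inclRV k V R x₁ = inclVR k V R x₂ →
          embVGVA k G V R ρ ((TensorProduct.map α LinearMap.id) x₁)
            = embVVGA k G V R ρ ((TensorProduct.map LinearMap.id α) x₂))) := by
  have gi := gA_inj hR hKoszul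
  have vi := embVGA_inj hR hKoszul
  have hTheta : ∀ (x₁ : (R : Submodule k (V ⊗[k] V)) ⊗[k] V)
      (x₂ : V ⊗[k] (R : Submodule k (V ⊗[k] V))),
      embVVGA k G V R ρ (Theta k G V R ρ α x₁ x₂)
        = embVGVA k G V R ρ ((TensorProduct.map α LinearMap.id) x₁)
            - embVVGA k G V R ρ ((TensorProduct.map LinearMap.id α) x₂) := by
    intro x₁ x₂
    rw [Theta, map_sub, embVGVA_eq]
  have hA4 : ∀ (x₁ : (R : Submodule k (V ⊗[k] V)) ⊗[k] V)
      (x₂ : V ⊗[k] (R : Submodule k (V ⊗[k] V))) y,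
      (embVGA k G V R ρ (αext k G V R α y) + sumAlphaLam k G V R ρ lam α x₁
            = embVGA k G V R ρ ((TensorProduct.map LinearMap.id β) x₂)
              - embGVA k G V R ρ ((TensorProduct.map β LinearMap.id) x₁)) ↔
      αext k G V R α y + Aterm ρ R lam α β x₁ x₂ = 0 := by
    intro x₁ x₂ y
    rw [sumAlphaLam_eq, embGVA_eq, ← map_add, ← map_sub, vi.eq_iff, ← sub_eq_zero]
    rw [Aterm]
    constructor <;> intro h <;> rw [← h] <;> abel
  constructor
  · intro hp
    have hc : Cond ρ R hR lam α β := cond_of_pbw hKoszul hp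
    refine ⟨?_, ?_, ?_, ?_, ?_, ?_⟩
    · intro g h v
      have e := hc.c1 g h v
      rw [A_mul, A_mul, ← map_sub, ← map_add]
      refine (congrArg _ ?_).trans (map_zero _)
      rw [ofg, ofg, e, lamMk, lamMk]
      simp only [LinearMap.comp_apply, TensorProduct.mk_apply]
      abel
    · intro g r
      have e := hc.c2 g r
      rw [A_mul, A_mul, ← map_sub, ← map_sub]
      refine congrArg _ ?_
      rw [sub_eq_sub_iff_add_eq_add, add_comm]
      exact e.symm.trans rfl |>.trans rfl
    · intro g r
      have e := hc.c3 g r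
      rw [A_lact, A_ract, mulgv, mulvg, ← map_sub, ← map_add]
      refine congrArg _ ?_
      rw [sub_eq_iff_eq_add']
      exact e
    · intro x₁ x₂ hx y hy
      obtain ⟨y', h1, h2, h3⟩ := hc.c4 x₁ x₂ hx
      obtain rfl : y = y' := inclRG_inj R (hy.trans h1.symm)
      exact (hA4 x₁ x₂ y).2 h2
    · intro x₁ x₂ hx y hy
      obtain ⟨y', h1, h2, h3⟩ := hc.c4 x₁ x₂ hx
      obtain rfl : y = y' := inclRG_inj R (hy.trans h1.symm)
      rw [← map_neg, eq_neg_of_add_eq_zero_left h3]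
    · intro x₁ x₂ hx
      obtain ⟨y', h1, h2, h3⟩ := hc.c4 x₁ x₂ hx
      rw [← sub_eq_zero, ← hTheta, ← h1, embVVGA_incl]
  · rintro ⟨f1, f2, f3, f4, f5, f6⟩
    refine pbw_of_cond (hR := hR) hKoszul ⟨?_, ?_, ?_, ?_⟩
    · intro g h v
      have e := f1 g h v
      rw [A_mul, A_mul, ← map_sub, ← map_add] at e
      have e' := gi (e.trans (map_zero _).symm)
      rw [sub_add_eq_add_sub, sub_eq_zero] at e'
      exact e'.symm
    · intro g r
      have e := f2 g r
      rw [A_mul, A_mul, ← map_sub, ← map_sub] at e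
      have e' := gi e
      rw [sub_eq_sub_iff_add_eq_add, add_comm] at e'
      exact e'.symm
    · intro g r
      have e := f3 g r
      rw [A_lact, A_ract, mulgv, mulvg, ← map_sub, ← map_add] at e
      have e' := vi e
      rw [sub_eq_iff_eq_add'] at e'
      exact e'
    · intro x₁ x₂ hx
      have e6 := f6 x₁ x₂ hx
      rw [← sub_eq_zero, ← hTheta] at e6
      obtain ⟨y, hy⟩ := embVVGA_ker hR hKoszul _ e6
      refine ⟨y, hy, (hA4 x₁ x₂ y).1 (f4 x₁ x₂ hx y hy), ?_⟩
      have e5 := f5 x₁ x₂ hx y hy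
      rw [← map_neg] at e5
      rw [gi e5]; simp
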